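/- arXiv:1207.0724 — 2 statements merged into one kernel-verified Lean document; each statement's English description precedes it below -/
import Mathlib

section
/- Let d ≥ 1 and let R be a reduced crystallographic root system spanning ℝ^d, with Weyl group W(R) ⊆ O(d) and rotation subgroup W(R)⁺ = ker(det). Then in the formal power series ring ℤ⟦t⟧ one has the identity ∑_{n≥0} dim( H_n(ℝ^d)^{W(R)⁺} ) tⁿ = (1 − t²)·(1 + t^{|R|/2})·P_R(t), where P_R(t) = ∑_{n≥0} dim( Pol_n(ℝ^d)^{W(R)} ) tⁿ and |R| is the number of roots. -/
open MvPolynomial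

noncomputable section

/-- The action of an (invertible) matrix `g` on polynomial functions on `ℝ^ι`, given by
`(g · P)(x) = P (g⁻¹ x)`; concretely, substitute `X i ↦ ∑ j (g⁻¹) i j • X j`. -/
def matrixAct {ι : Type} [Fintype ι] [DecidableEq ι] (g : Matrix ι ι ℝ) :
    MvPolynomial ι ℝ →ₗ[ℝ] MvPolynomial ι ℝ :=
  (aeval (R := ℝ) fun i => ∑ j, C (g⁻¹ i j) * X j).toLinearMap

/-- The standard Laplace operator `Δ = ∑ i ∂²/∂x_i²` on polynomials. -/
def laplacian {ι : Type} [Fintype ι] [DecidableEq ι] :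
    MvPolynomial ι ℝ →ₗ[ℝ] MvPolynomial ι ℝ :=
  ∑ i, (pderiv i).toLinearMap ∘ₗ (pderiv i).toLinearMap

/-- `Pol_n(ℝ^ι)^Γ`: the `Γ`-invariant homogeneous polynomials of degree `n`. -/
def polInv {ι : Type} [Fintype ι] [DecidableEq ι] (Γ : Set (Matrix ι ι ℝ)) (n : ℕ) :
    Submodule ℝ (MvPolynomial ι ℝ) :=
  homogeneousSubmodule ι ℝ n ⊓ ⨅ g ∈ Γ, LinearMap.eqLocus (matrixAct g) LinearMap.id

/-- `H_n(ℝ^ι)^Γ`: the `Γ`-invariant harmonic homogeneous polynomials of degree `n`. -/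
def harmInv {ι : Type} [Fintype ι] [DecidableEq ι] (Γ : Set (Matrix ι ι ℝ)) (n : ℕ) :
    Submodule ℝ (MvPolynomial ι ℝ) :=
  homogeneousSubmodule ι ℝ n ⊓ LinearMap.ker laplacian ⊓
    ⨅ g ∈ Γ, LinearMap.eqLocus (matrixAct g) LinearMap.id

/-- The standard Euclidean inner product on `ℝ^d`. -/
def dotP {d : ℕ} (x y : Fin d → ℝ) : ℝ := ∑ i, x i * y i

/-- The orthogonal rootReflection `s_α` in the hyperplane orthogonal to `α`. -/
def rootReflection {d : ℕ} (α x : Fin d → ℝ) : Fin d → ℝ :=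
  x - (2 * dotP x α / dotP α α) • α

/-- The Weyl group `W(R)`: the subgroup generated by the reflections `s_α`, `α ∈ R`. -/
def weylGroup {d : ℕ} (R : Finset (Fin d → ℝ)) : Subgroup (Matrix (Fin d) (Fin d) ℝ)ˣ :=
  Subgroup.closure
    {g | ∃ α ∈ R, ∀ x : Fin d → ℝ, (↑g : Matrix (Fin d) (Fin d) ℝ).mulVec x = rootReflection α x}

/-- `W(R)`, as a set of matrices. -/
def weylSet {d : ℕ} (R : Finset (Fin d → ℝ)) : Set (Matrix (Fin d) (Fin d) ℝ) :=
  {m | ∃ g ∈ weylGroup R, m = (↑g : Matrix (Fin d) (Fin d) ℝ)}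

/-- `W(R)⁺ = ker (det)`, the rotation subgroup, as a set of matrices. -/
def weylPlusSet {d : ℕ} (R : Finset (Fin d → ℝ)) : Set (Matrix (Fin d) (Fin d) ℝ) :=
  {m | ∃ g ∈ weylGroup R,
    (↑g : Matrix (Fin d) (Fin d) ℝ).det = 1 ∧ m = (↑g : Matrix (Fin d) (Fin d) ℝ)}

/-!
Multiplication by `r² = ∑ xᵢ²` is adjoint to the Laplace operator for the Fischer inner product, so
`P ↦ Δ(r² P)` is injective, hence bijective, on each finite-dimensional space of homogeneous
invariants of an orthogonal group `Γ`. Therefore `Δ` maps `Pol_{n+2}^Γ` onto `Pol_n^Γ`, with kernel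
`H_{n+2}^Γ`, which is the factor `1 - t²`.

The `W⁺`-invariants are the direct sum of the `W`-invariants and the anti-invariants. An
anti-invariant vanishes on every root hyperplane, so it is divisible by the product `D` of the
positive roots, which has degree `|R|/2` and is itself anti-invariant. Hence the anti-invariants are
`D` times the invariants, which is the factor `1 + t^{|R|/2}`.
-/

open Matrix
open scoped Nat PowerSeries

section HilbertSeries

variable {K M : Type*} [Field K] [AddCommGroup M] [Module K M]

/-- The Hilbert series `∑ dim (V n) tⁿ` of a sequence of subspaces. Infinite-dimensional terms count
as `0`. -/
def hilbertSeries (V : ℕ → Submodule K M) : ℤ⟦X⟧ :=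
  PowerSeries.mk fun n => (Module.finrank K (V n) : ℤ)

theorem coeff_hilbertSeries (V : ℕ → Submodule K M) (n : ℕ) :
    PowerSeries.coeff n (hilbertSeries V) = Module.finrank K (V n) :=
  PowerSeries.coeff_mk n _

theorem hilbertSeries_eq_X_pow_mul {V W : ℕ → Submodule K M} {N : ℕ}
    (hlow : ∀ n < N, V n = ⊥)
    (hshift : ∀ n, Module.finrank K (V (n + N)) = Module.finrank K (W n)) :
    hilbertSeries V = PowerSeries.X ^ N * hilbertSeries W := by
  ext n
  rw [PowerSeries.coeff_X_pow_mul', coeff_hilbertSeries]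
  split_ifs with hn
  · obtain ⟨k, rfl⟩ := Nat.exists_eq_add_of_le' hn
    rw [Nat.add_sub_cancel, coeff_hilbertSeries, hshift]
  · rw [hlow n (not_le.mp hn), finrank_bot, Nat.cast_zero]

theorem hilbertSeries_eq_add_of_disjoint {U V W : ℕ → Submodule K M}
    [∀ n, FiniteDimensional K (V n)] [∀ n, FiniteDimensional K (W n)]
    (hsup : ∀ n, U n = V n ⊔ W n) (hdisj : ∀ n, Disjoint (V n) (W n)) :
    hilbertSeries U = hilbertSeries V + hilbertSeries W := by
  ext n
  have hdim := Submodule.finrank_sup_add_finrank_inf_eq (V n) (W n)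
  rw [(hdisj n).eq_bot, finrank_bot, add_zero, ← hsup] at hdim
  simp only [map_add, coeff_hilbertSeries, hdim, Nat.cast_add]

theorem finrank_eq_finrank_ker_add_of_injective_comp {V W : Type*} [AddCommGroup V] [Module K V]
    [AddCommGroup W] [Module K W] [FiniteDimensional K V] [FiniteDimensional K W]
    {f : V →ₗ[K] W} {g : W →ₗ[K] V} (hfg : Function.Injective (f ∘ₗ g)) :
    Module.finrank K V = Module.finrank K f.ker + Module.finrank K W := by
  have hsurj : Function.Surjective f :=
    .of_comp (g := g) (LinearMap.injective_iff_surjective.mp hfg)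
  rw [← f.finrank_range_add_finrank_ker, LinearMap.range_eq_top.mpr hsurj, finrank_top, add_comm]

end HilbertSeries

section Fischer

variable {σ R : Type*}

/-- The Fischer form `⟨P, Q⟩ = (P(∂) Q)(0)`. Monomials are orthogonal for it, with
`⟨xᵐ, xᵐ⟩ = ∏ i, (m i)!`, which is taken as the definition. -/
def fischerForm [CommSemiring R] : MvPolynomial σ R →ₗ[R] MvPolynomial σ R →ₗ[R] R :=
  (basisMonomials σ R).constr R fun m => (m.prod fun _ k => (k ! : R)) • lcoeff R m

theorem fischerForm_monomial [CommSemiring R] (m : σ →₀ ℕ) (a : R) (Q : MvPolynomial σ R) :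
    fischerForm (monomial m a) Q = a * ((m.prod fun _ k => (k ! : R)) * coeff m Q) := by
  have hbasis : monomial m a = a • basisMonomials σ R m := by simp [smul_monomial]
  rw [hbasis, map_smul, fischerForm, Module.Basis.constr_basis]
  rfl

theorem fischerForm_apply [CommSemiring R] (P Q : MvPolynomial σ R) :
    fischerForm P Q = ∑ m ∈ P.support,
      coeff m P * ((m.prod fun _ k => (k ! : R)) * coeff m Q) := by
  conv_lhs => rw [← P.support_sum_monomial_coeff]
  simp only [map_sum, LinearMap.sum_apply, fischerForm_monomial]

theorem prod_factorial_add_single [CommSemiring R] (m : σ →₀ ℕ) (i : σ) :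
    ((m + Finsupp.single i 1).prod fun _ k => (k ! : R)) =
      (m i + 1) * m.prod fun _ k => (k ! : R) := by
  classical
  have hprod (l : σ →₀ ℕ) (hl : l.support ⊆ insert i m.support) :
      (l.prod fun _ k => (k ! : R)) = ∏ j ∈ insert i m.support, ((l j)! : R) :=
    l.prod_of_support_subset hl _ fun _ _ => by simp
  have hsupport : (m + Finsupp.single i 1).support ⊆ insert i m.support := by
    rw [Finset.insert_eq, Finset.union_comm]
    exact Finsupp.support_add.trans (Finset.union_subset_union_right Finsupp.support_single_subset)
  rw [hprod _ hsupport, hprod m (Finset.subset_insert _ _),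
    ← Finset.mul_prod_erase _ _ (Finset.mem_insert_self i _),
    ← Finset.mul_prod_erase _ _ (Finset.mem_insert_self i _), ← mul_assoc]
  congr 1
  · simp [Nat.factorial_succ]
  · refine Finset.prod_congr rfl fun j hj => ?_
    simp [Finsupp.single_eq_of_ne (Finset.ne_of_mem_erase hj)]

theorem fischerForm_X_mul [CommSemiring R] (i : σ) (P Q : MvPolynomial σ R) :
    fischerForm (X i * P) Q = fischerForm P (pderiv i Q) := by
  induction P using MvPolynomial.induction_on' with
  | monomial m a =>
    rw [mul_comm, X, monomial_mul, mul_one, fischerForm_monomial, fischerForm_monomial,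
      coeff_pderiv, prod_factorial_add_single]
    ring
  | add P₁ P₂ h₁ h₂ => simp only [mul_add, map_add, LinearMap.add_apply, h₁, h₂]

theorem eq_zero_of_fischerForm_self [CommRing R] [LinearOrder R] [IsStrictOrderedRing R]
    {P : MvPolynomial σ R} (h : fischerForm P P = 0) : P = 0 := by
  have hweight (m : σ →₀ ℕ) : 0 < m.prod fun _ k => (k ! : R) :=
    Finset.prod_pos fun i _ => Nat.cast_pos.mpr (m i).factorial_pos
  rw [fischerForm_apply, Finset.sum_eq_zero_iff_of_nonneg fun m _ => by
    rw [mul_left_comm]; exact mul_nonneg (hweight m).le (mul_self_nonneg _)] at h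
  rw [← support_eq_empty, Finset.eq_empty_iff_forall_notMem]
  intro m hm
  simpa [(hweight m).ne', mem_support_iff.mp hm] using h m hm

end Fischer

section LinearForm

variable {ι R : Type*} [Fintype ι]

/-- The linear form `∑ i, v i xᵢ` with coefficient vector `v`. -/
def linearForm [CommSemiring R] : (ι → R) →ₗ[R] MvPolynomial ι R :=
  Fintype.linearCombination R X

theorem linearForm_eq_sum [CommSemiring R] (v : ι → R) :
    linearForm v = ∑ i, C (v i) * X i := by
  simp only [linearForm, Fintype.linearCombination_apply, smul_eq_C_mul]

theorem linearForm_single [CommSemiring R] [DecidableEq ι] (i : ι) :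
    linearForm (Pi.single i (1 : R)) = X i := by
  simp [linearForm, Fintype.linearCombination_apply_single]

theorem isHomogeneous_linearForm [CommSemiring R] (v : ι → R) : (linearForm v).IsHomogeneous 1 := by
  rw [linearForm_eq_sum]
  exact .sum _ _ _ fun i _ => isHomogeneous_C_mul_X (v i) i

theorem coeff_linearForm [CommSemiring R] (v : ι → R) (i : ι) :
    (linearForm v).coeff (Finsupp.single i 1) = v i := by
  classical
  simp [linearForm_eq_sum, coeff_sum, coeff_C_mul, coeff_X, Finsupp.single_left_inj]

theorem linearForm_injective [CommSemiring R] :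
    Function.Injective (linearForm : (ι → R) → MvPolynomial ι R) := fun v w h => by
  ext i
  rw [← coeff_linearForm v, h, coeff_linearForm]

theorem linearForm_ne_zero [CommSemiring R] {v : ι → R} (hv : v ≠ 0) : linearForm v ≠ 0 :=
  (map_ne_zero_iff _ linearForm_injective).mpr hv

variable [Field R]

theorem prime_linearForm {v : ι → R} (hv : v ≠ 0) : Prime (linearForm v) := by
  refine (irreducible_of_totalDegree_eq_one
    ((isHomogeneous_linearForm v).totalDegree (linearForm_ne_zero hv)) fun c hc => ?_).prime
  rw [isUnit_iff_ne_zero]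
  rintro rfl
  refine hv (funext fun i => ?_)
  rw [← coeff_linearForm v]
  exact zero_dvd_iff.mp (hc _)

theorem exists_eq_smul_of_linearForm_dvd {v w : ι → R} (hw : w ≠ 0)
    (h : linearForm v ∣ linearForm w) : ∃ c : R, w = c • v := by
  obtain ⟨q, hq⟩ := h
  have hvq : linearForm v * q ≠ 0 := hq ▸ linearForm_ne_zero hw
  have hv : linearForm v ≠ 0 := left_ne_zero_of_mul hvq
  have hdeg := totalDegree_mul_of_isDomain hv (right_ne_zero_of_mul hvq)
  rw [← hq, (isHomogeneous_linearForm w).totalDegree (linearForm_ne_zero hw),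
    (isHomogeneous_linearForm v).totalDegree hv] at hdeg
  obtain ⟨c, rfl⟩ : ∃ c, q = C c := ⟨_, totalDegree_eq_zero_iff_eq_C.mp (by lia)⟩
  refine ⟨c, linearForm_injective ?_⟩
  rw [hq, map_smul, smul_eq_C_mul, mul_comm]

end LinearForm

section Divisibility

variable {σ R : Type*} [CommRing R]

attribute [local instance] gradedAlgebra

theorem isHomogeneous_of_mul_left [IsDomain R] {P Q : MvPolynomial σ R} {m n : ℕ}
    (hP : P.IsHomogeneous m) (hP0 : P ≠ 0) (hPQ : (P * Q).IsHomogeneous (m + n)) :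
    Q.IsHomogeneous n := by
  have hcomp := DirectSum.coe_decompose_mul_add_of_left_mem (homogeneousSubmodule σ R)
    (b := Q) (j := n) hP
  rw [DirectSum.decompose_of_mem_same (homogeneousSubmodule σ R) hPQ] at hcomp
  rw [mul_left_cancel₀ hP0 hcomp]
  exact (DirectSum.decompose (homogeneousSubmodule σ R) Q n).2

theorem mul_eq_zero_of_isHomogeneous_of_lt {P Q : MvPolynomial σ R} {m n : ℕ}
    (hP : P.IsHomogeneous m) (hPQ : (P * Q).IsHomogeneous n) (hn : n < m) : P * Q = 0 := by
  rw [← DirectSum.decompose_of_mem_same (homogeneousSubmodule σ R) hPQ]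
  exact DirectSum.coe_decompose_mul_of_left_mem_of_not_le _ hP hn.not_ge

theorem dvd_sub_algHom {f : MvPolynomial σ R →ₐ[R] MvPolynomial σ R} {D : MvPolynomial σ R}
    (hD : ∀ i, D ∣ X i - f (X i)) (P : MvPolynomial σ R) :
    D ∣ P - f P := by
  let π := Ideal.Quotient.mkₐ R (Ideal.span {D})
  have hπ : π = π.comp f := algHom_ext fun i =>
    Ideal.Quotient.eq.mpr (Ideal.mem_span_singleton.mpr (hD i))
  exact Ideal.mem_span_singleton.mp (Ideal.Quotient.eq.mp (DFunLike.congr_fun hπ P))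

end Divisibility

section Action

instance finiteDimensional_homogeneousSubmodule (σ K : Type*) [Finite σ] [Field K] (n : ℕ) :
    FiniteDimensional K (homogeneousSubmodule σ K n) :=
  Module.Finite.iff_fg.mpr (homogeneousSubmodule_fg σ K n)

variable {ι : Type} [Fintype ι] [DecidableEq ι]

/-- `matrixAct g` as an algebra homomorphism. -/
def matrixActHom (g : Matrix ι ι ℝ) : MvPolynomial ι ℝ →ₐ[ℝ] MvPolynomial ι ℝ :=
  aeval fun i => ∑ j, C (g⁻¹ i j) * X j

theorem matrixActHom_X (g : Matrix ι ι ℝ) (i : ι) :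
    matrixActHom g (X i) = linearForm (g⁻¹ i) := by
  rw [matrixActHom, aeval_X, linearForm_eq_sum]

theorem matrixActHom_linearForm (g : Matrix ι ι ℝ) (v : ι → ℝ) :
    matrixActHom g (linearForm v) = linearForm (v ᵥ* g⁻¹) := by
  rw [vecMul_eq_sum, map_sum, linearForm, Fintype.linearCombination_apply, map_sum]
  exact Finset.sum_congr rfl fun i _ => by rw [map_smul, map_smul, matrixActHom_X]; rfl

theorem matrixActHom_mul (g h : Matrix ι ι ℝ) (P : MvPolynomial ι ℝ) :
    matrixActHom (g * h) P = matrixActHom g (matrixActHom h P) := by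
  suffices matrixActHom (g * h) = (matrixActHom g).comp (matrixActHom h) from
    DFunLike.congr_fun this P
  refine algHom_ext fun i => ?_
  rw [AlgHom.comp_apply, matrixActHom_X, matrixActHom_X, matrixActHom_linearForm,
    Matrix.mul_inv_rev, mul_apply_eq_vecMul]

theorem matrixActHom_one (P : MvPolynomial ι ℝ) : matrixActHom 1 P = P := by
  suffices matrixActHom (1 : Matrix ι ι ℝ) = AlgHom.id ℝ _ from DFunLike.congr_fun this P
  refine algHom_ext fun i => ?_
  have hrow : (1 : Matrix ι ι ℝ) i = Pi.single i 1 := funext fun _ => one_eq_pi_single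
  rw [matrixActHom_X, inv_one, hrow, linearForm_single, AlgHom.id_apply]

theorem isHomogeneous_matrixActHom (g : Matrix ι ι ℝ) {P : MvPolynomial ι ℝ} {n : ℕ}
    (hP : P.IsHomogeneous n) : (matrixActHom g P).IsHomogeneous n := by
  rw [← one_mul n]
  exact hP.aeval _ fun i => .sum _ _ _ fun j _ => isHomogeneous_C_mul_X _ j

theorem matrixActHom_eq_smul_of_mem_closure {S : Set (Matrix ι ι ℝ)ˣ}
    (χ : (Matrix ι ι ℝ)ˣ →* ℝˣ) {P : MvPolynomial ι ℝ}
    (hP : ∀ g ∈ S, matrixActHom (g : Matrix ι ι ℝ) P = (χ g : ℝ) • P)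
    {g : (Matrix ι ι ℝ)ˣ} (hg : g ∈ Subgroup.closure S) :
    matrixActHom (g : Matrix ι ι ℝ) P = (χ g : ℝ) • P := by
  induction hg using Subgroup.closure_induction with
  | mem g hg => exact hP g hg
  | one => rw [Units.val_one, matrixActHom_one, map_one, Units.val_one, one_smul]
  | mul g h _ _ hg hh =>
    rw [Units.val_mul, matrixActHom_mul, hh, map_smul, hg, map_mul, Units.val_mul, smul_smul,
      mul_comm]
  | inv g _ hg =>
    have happly := congrArg (matrixActHom (↑g⁻¹ : Matrix ι ι ℝ)) hg
    rw [← matrixActHom_mul, Units.inv_mul, matrixActHom_one, map_smul] at happly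
    rw [map_inv, happly, smul_smul, Units.inv_mul, one_smul, ← happly]

theorem mem_polInv_iff {Γ : Set (Matrix ι ι ℝ)} {n : ℕ} {P : MvPolynomial ι ℝ} :
    P ∈ polInv Γ n ↔ P.IsHomogeneous n ∧ ∀ g ∈ Γ, matrixActHom g P = P := by
  simp only [polInv, Submodule.mem_inf, mem_homogeneousSubmodule, Submodule.mem_iInf,
    LinearMap.mem_eqLocus, LinearMap.id_apply]
  rfl

theorem harmInv_eq_polInv_inf_ker (Γ : Set (Matrix ι ι ℝ)) (n : ℕ) :
    harmInv Γ n = polInv Γ n ⊓ LinearMap.ker laplacian :=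
  inf_right_comm _ _ _

instance finiteDimensional_polInv (Γ : Set (Matrix ι ι ℝ)) (n : ℕ) :
    FiniteDimensional ℝ (polInv Γ n) :=
  Submodule.finiteDimensional_inf_left _ _

end Action

section Harmonic

variable {ι : Type} [Fintype ι]

/-- The squared Euclidean norm `∑ i, xᵢ²` as a polynomial; multiplication by it is adjoint to the
Laplace operator. -/
def sqNorm : MvPolynomial ι ℝ := ∑ i, X i * X i

theorem isHomogeneous_sqNorm : (sqNorm : MvPolynomial ι ℝ).IsHomogeneous 2 :=
  .sum _ _ _ fun i _ => (isHomogeneous_X ℝ i).mul (isHomogeneous_X ℝ i)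

theorem sqNorm_ne_zero [Nonempty ι] : (sqNorm : MvPolynomial ι ℝ) ≠ 0 := fun h => by
  simpa [sqNorm] using congrArg (eval fun _ => (1 : ℝ)) h

variable [DecidableEq ι]

theorem laplacian_apply (P : MvPolynomial ι ℝ) : laplacian P = ∑ i, pderiv i (pderiv i P) := by
  simp [laplacian]

theorem isHomogeneous_laplacian {P : MvPolynomial ι ℝ} {n : ℕ} (hP : P.IsHomogeneous n) :
    (laplacian P).IsHomogeneous (n - 2) := by
  rw [laplacian_apply]
  exact .sum _ _ _ fun i _ => hP.pderiv.pderiv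

theorem laplacian_eq_zero_of_isHomogeneous_of_lt_two {P : MvPolynomial ι ℝ} {n : ℕ}
    (hP : P.IsHomogeneous n) (hn : n < 2) : laplacian P = 0 := by
  rw [laplacian_apply]
  refine Finset.sum_eq_zero fun i _ => ?_
  have hconst : (pderiv i P).IsHomogeneous 0 := by
    simpa only [show n - 1 = 0 by lia] using hP.pderiv (i := i)
  rw [totalDegree_eq_zero_iff_eq_C.mp ((totalDegree_zero_iff_isHomogeneous ι).mpr hconst), pderiv_C]

theorem pderiv_matrixActHom (g : Matrix ι ι ℝ) (i : ι) (P : MvPolynomial ι ℝ) :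
    pderiv i (matrixActHom g P) = ∑ j, C (g⁻¹ j i) * matrixActHom g (pderiv j P) := by
  induction P using MvPolynomial.induction_on with
  | C a => simp [matrixActHom]
  | add P Q hP hQ => simp only [map_add, hP, hQ, mul_add, Finset.sum_add_distrib]
  | mul_X P k hP =>
    simp only [map_mul, pderiv_mul, hP, map_add, mul_add, Finset.sum_add_distrib]
    congr 1
    · simp only [Finset.sum_mul, mul_assoc]
    · simp [matrixActHom_X, linearForm_eq_sum, Pi.single_apply, mul_comm]

theorem laplacian_matrixActHom {g : Matrix ι ι ℝ} (hg : g ∈ orthogonalGroup ι ℝ)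
    (P : MvPolynomial ι ℝ) : laplacian (matrixActHom g P) = matrixActHom g (laplacian P) := by
  have hrows (j k : ι) : ∑ i, g⁻¹ j i * g⁻¹ k i = (1 : Matrix ι ι ℝ) j k := by
    rw [← (mem_orthogonalGroup_iff' ι ℝ).mp hg,
      inv_eq_right_inv ((mem_orthogonalGroup_iff ι ℝ).mp hg)]
    rfl
  calc laplacian (matrixActHom g P)
      = ∑ j, ∑ k, C (∑ i, g⁻¹ j i * g⁻¹ k i) * matrixActHom g (pderiv k (pderiv j P)) := by
        simp only [laplacian_apply, pderiv_matrixActHom, map_sum, pderiv_C_mul, Finset.mul_sum,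
          Finset.sum_mul, map_mul, mul_assoc]
        rw [Finset.sum_comm]
        exact Finset.sum_congr rfl fun j _ => Finset.sum_comm
    _ = matrixActHom g (laplacian P) := by
        simp [hrows, one_apply, laplacian_apply]

theorem matrixActHom_sqNorm {g : Matrix ι ι ℝ} (hg : g ∈ orthogonalGroup ι ℝ) :
    matrixActHom g (sqNorm : MvPolynomial ι ℝ) = sqNorm := by
  have hcols (j k : ι) : ∑ i, g⁻¹ i j * g⁻¹ i k = (1 : Matrix ι ι ℝ) j k := by
    rw [← (mem_orthogonalGroup_iff ι ℝ).mp hg,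
      inv_eq_right_inv ((mem_orthogonalGroup_iff ι ℝ).mp hg)]
    rfl
  calc matrixActHom g sqNorm
      = ∑ j, ∑ k, C (∑ i, g⁻¹ i j * g⁻¹ i k) * (X j * X k) := by
        simp only [sqNorm, map_sum (matrixActHom g), map_mul (matrixActHom g), matrixActHom_X,
          linearForm_eq_sum, Finset.sum_mul_sum, map_sum C, map_mul C]
        rw [Finset.sum_comm]
        refine Finset.sum_congr rfl fun j _ => ?_
        rw [Finset.sum_comm]
        refine Finset.sum_congr rfl fun k _ => ?_
        rw [Finset.sum_mul]
        exact Finset.sum_congr rfl fun i _ => by ring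
    _ = sqNorm := by simp [hcols, one_apply, sqNorm]

theorem fischerForm_sqNorm_mul (P Q : MvPolynomial ι ℝ) :
    fischerForm (sqNorm * P) Q = fischerForm P (laplacian Q) := by
  simp only [sqNorm, Finset.sum_mul, mul_assoc, map_sum, LinearMap.sum_apply, fischerForm_X_mul,
    laplacian_apply]

theorem eq_zero_of_laplacian_sqNorm_mul_eq_zero [Nonempty ι] {P : MvPolynomial ι ℝ}
    (h : laplacian (sqNorm * P) = 0) : P = 0 := by
  have hself : fischerForm (sqNorm * P) (sqNorm * P) = 0 := by
    rw [fischerForm_sqNorm_mul, h, map_zero]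
  exact (mul_eq_zero.mp (eq_zero_of_fischerForm_self hself)).resolve_left sqNorm_ne_zero

variable {Γ : Set (Matrix ι ι ℝ)}

theorem sqNorm_mul_mem_polInv (hΓ : ∀ g ∈ Γ, g ∈ orthogonalGroup ι ℝ) {n : ℕ}
    {P : MvPolynomial ι ℝ} (hP : P ∈ polInv Γ n) :
    sqNorm * P ∈ polInv Γ (n + 2) := by
  rw [mem_polInv_iff] at hP ⊢
  refine ⟨add_comm 2 n ▸ isHomogeneous_sqNorm.mul hP.1, fun g hg => ?_⟩
  rw [map_mul, matrixActHom_sqNorm (hΓ g hg), hP.2 g hg]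

theorem laplacian_mem_polInv (hΓ : ∀ g ∈ Γ, g ∈ orthogonalGroup ι ℝ) {n : ℕ}
    {P : MvPolynomial ι ℝ} (hP : P ∈ polInv Γ (n + 2)) :
    laplacian P ∈ polInv Γ n := by
  rw [mem_polInv_iff] at hP ⊢
  refine ⟨isHomogeneous_laplacian hP.1, fun g hg => ?_⟩
  rw [← laplacian_matrixActHom (hΓ g hg), hP.2 g hg]

theorem finrank_polInv_add_two [Nonempty ι] (hΓ : ∀ g ∈ Γ, g ∈ orthogonalGroup ι ℝ)
    (n : ℕ) :
    Module.finrank ℝ (polInv Γ (n + 2)) =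
      Module.finrank ℝ (harmInv Γ (n + 2)) + Module.finrank ℝ (polInv Γ n) := by
  let L : polInv Γ (n + 2) →ₗ[ℝ] polInv Γ n :=
    laplacian.restrict fun _ => laplacian_mem_polInv hΓ
  let T : polInv Γ n →ₗ[ℝ] polInv Γ (n + 2) :=
    (LinearMap.mulLeft ℝ sqNorm).restrict fun _ => sqNorm_mul_mem_polInv hΓ
  have hinj : Function.Injective (L ∘ₗ T) := by
    refine (injective_iff_map_eq_zero _).mpr fun P hP => Subtype.ext ?_
    exact eq_zero_of_laplacian_sqNorm_mul_eq_zero (congrArg Subtype.val hP)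
  have hker : L.ker.map (polInv Γ (n + 2)).subtype = harmInv Γ (n + 2) := by
    rw [LinearMap.ker_restrict, Submodule.map_comap_subtype, harmInv_eq_polInv_inf_ker]
  rw [finrank_eq_finrank_ker_add_of_injective_comp hinj, ← hker, Submodule.finrank_map_subtype_eq]

theorem hilbertSeries_harmInv [Nonempty ι] (hΓ : ∀ g ∈ Γ, g ∈ orthogonalGroup ι ℝ) :
    hilbertSeries (harmInv Γ) = (1 - PowerSeries.X ^ 2) * hilbertSeries (polInv Γ) := by
  ext n
  rw [sub_mul, one_mul, map_sub, PowerSeries.coeff_X_pow_mul']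
  simp only [coeff_hilbertSeries]
  split_ifs with hn
  · obtain ⟨m, rfl⟩ := Nat.exists_eq_add_of_le' hn
    rw [Nat.add_sub_cancel, finrank_polInv_add_two hΓ, Nat.cast_add, add_sub_cancel_right]
  · have hharm : polInv Γ n ≤ LinearMap.ker laplacian := fun P hP =>
      laplacian_eq_zero_of_isHomogeneous_of_lt_two hP.1 (not_le.mp hn)
    rw [harmInv_eq_polInv_inf_ker, inf_eq_left.mpr hharm, sub_zero]

end Harmonic


section SemiInvariants

variable {ι : Type} [Fintype ι] [DecidableEq ι]

/-- The homogeneous polynomials `P` of degree `n` with `g · P = det g • P` for all `g ∈ Γ`; for a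
reflection group these are the anti-invariants. -/
def polAlt (Γ : Set (Matrix ι ι ℝ)) (n : ℕ) : Submodule ℝ (MvPolynomial ι ℝ) :=
  homogeneousSubmodule ι ℝ n ⊓ ⨅ g ∈ Γ, LinearMap.eqLocus (matrixAct g) (g.det • LinearMap.id)

theorem mem_polAlt_iff {Γ : Set (Matrix ι ι ℝ)} {n : ℕ} {P : MvPolynomial ι ℝ} :
    P ∈ polAlt Γ n ↔ P.IsHomogeneous n ∧ ∀ g ∈ Γ, matrixActHom g P = g.det • P := by
  simp only [polAlt, Submodule.mem_inf, mem_homogeneousSubmodule, Submodule.mem_iInf,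
    LinearMap.mem_eqLocus, LinearMap.smul_apply, LinearMap.id_apply]
  rfl

instance finiteDimensional_polAlt (Γ : Set (Matrix ι ι ℝ)) (n : ℕ) :
    FiniteDimensional ℝ (polAlt Γ n) :=
  Submodule.finiteDimensional_inf_left _ _

/-- The elements of a group of invertible matrices, as a set of matrices. -/
def matricesOf (G : Subgroup (Matrix ι ι ℝ)ˣ) : Set (Matrix ι ι ℝ) :=
  {m | ∃ g ∈ G, m = (g : Matrix ι ι ℝ)}

/-- The elements of determinant `1` of a group of invertible matrices, as a set of matrices. -/
def rotationsOf (G : Subgroup (Matrix ι ι ℝ)ˣ) : Set (Matrix ι ι ℝ) :=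
  {m | ∃ g ∈ G, (g : Matrix ι ι ℝ).det = 1 ∧ m = (g : Matrix ι ι ℝ)}

variable {G : Subgroup (Matrix ι ι ℝ)ˣ} {s : (Matrix ι ι ℝ)ˣ} {n : ℕ} {P : MvPolynomial ι ℝ}

theorem matrixActHom_eq_of_det_eq (hP : P ∈ polInv (rotationsOf G) n)
    {g h : (Matrix ι ι ℝ)ˣ} (hg : g ∈ G) (hh : h ∈ G)
    (hdet : (g : Matrix ι ι ℝ).det = (h : Matrix ι ι ℝ).det) :
    matrixActHom (g : Matrix ι ι ℝ) P = matrixActHom (h : Matrix ι ι ℝ) P := by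
  have hquot : (↑(h⁻¹ * g) : Matrix ι ι ℝ).det = 1 := by
    rw [Units.val_mul, det_mul, hdet, ← det_mul, Units.inv_mul, det_one]
  have hfix := (mem_polInv_iff.mp hP).2 _ ⟨_, mul_mem (inv_mem hh) hg, hquot, rfl⟩
  rw [← mul_inv_cancel_left h g, Units.val_mul, matrixActHom_mul, hfix]

theorem matrixActHom_of_det_eq_neg_one (hs : s ∈ G) (hdet : (s : Matrix ι ι ℝ).det = -1)
    (hP : P ∈ polInv (rotationsOf G) n) {g : (Matrix ι ι ℝ)ˣ} (hg : g ∈ G)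
    (hgdet : (g : Matrix ι ι ℝ).det = -1) :
    matrixActHom (g : Matrix ι ι ℝ) P = matrixActHom (s : Matrix ι ι ℝ) P ∧
      matrixActHom (g : Matrix ι ι ℝ) (matrixActHom (s : Matrix ι ι ℝ) P) = P := by
  refine ⟨matrixActHom_eq_of_det_eq hP hg hs (hgdet.trans hdet.symm), ?_⟩
  have hrot : (↑(g * s) : Matrix ι ι ℝ).det = 1 := by
    rw [Units.val_mul, det_mul, hgdet, hdet, neg_one_mul, neg_neg]
  rw [← matrixActHom_mul, ← Units.val_mul]
  exact (mem_polInv_iff.mp hP).2 _ ⟨_, mul_mem hg hs, hrot, rfl⟩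

theorem matrixActHom_mem_polInv_rotationsOf (hs : s ∈ G) (hP : P ∈ polInv (rotationsOf G) n) :
    matrixActHom (s : Matrix ι ι ℝ) P ∈ polInv (rotationsOf G) n := by
  refine mem_polInv_iff.mpr ⟨isHomogeneous_matrixActHom _ (mem_polInv_iff.mp hP).1, ?_⟩
  rintro _ ⟨g, hg, hgdet, rfl⟩
  rw [← matrixActHom_mul, ← Units.val_mul]
  refine matrixActHom_eq_of_det_eq hP (mul_mem hg hs) hs ?_
  rw [Units.val_mul, det_mul, hgdet, one_mul]

theorem add_matrixActHom_mem_polInv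
    (hG : ∀ g ∈ G, (g : Matrix ι ι ℝ).det = 1 ∨ (g : Matrix ι ι ℝ).det = -1)
    (hs : s ∈ G) (hdet : (s : Matrix ι ι ℝ).det = -1) (hP : P ∈ polInv (rotationsOf G) n) :
    P + matrixActHom (s : Matrix ι ι ℝ) P ∈ polInv (matricesOf G) n := by
  have hsum := add_mem hP (matrixActHom_mem_polInv_rotationsOf hs hP)
  rw [mem_polInv_iff] at hsum ⊢
  refine ⟨hsum.1, ?_⟩
  rintro _ ⟨g, hg, rfl⟩
  rcases hG g hg with hgdet | hgdet
  · exact hsum.2 _ ⟨g, hg, hgdet, rfl⟩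
  · obtain ⟨hgP, hgsP⟩ := matrixActHom_of_det_eq_neg_one hs hdet hP hg hgdet
    rw [map_add, hgP, hgsP, add_comm]

theorem sub_matrixActHom_mem_polAlt
    (hG : ∀ g ∈ G, (g : Matrix ι ι ℝ).det = 1 ∨ (g : Matrix ι ι ℝ).det = -1)
    (hs : s ∈ G) (hdet : (s : Matrix ι ι ℝ).det = -1) (hP : P ∈ polInv (rotationsOf G) n) :
    P - matrixActHom (s : Matrix ι ι ℝ) P ∈ polAlt (matricesOf G) n := by
  have hdiff := sub_mem hP (matrixActHom_mem_polInv_rotationsOf hs hP)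
  rw [mem_polInv_iff] at hdiff
  refine mem_polAlt_iff.mpr ⟨hdiff.1, ?_⟩
  rintro _ ⟨g, hg, rfl⟩
  rcases hG g hg with hgdet | hgdet
  · rw [hdiff.2 _ ⟨g, hg, hgdet, rfl⟩, hgdet, one_smul]
  · obtain ⟨hgP, hgsP⟩ := matrixActHom_of_det_eq_neg_one hs hdet hP hg hgdet
    rw [map_sub, hgP, hgsP, hgdet, neg_one_smul, neg_sub]

theorem polInv_le_polInv_rotationsOf : polInv (matricesOf G) n ≤ polInv (rotationsOf G) n := by
  intro P hP
  rw [mem_polInv_iff] at hP ⊢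
  exact ⟨hP.1, fun _ ⟨g, hg, _, hm⟩ => hP.2 _ ⟨g, hg, hm⟩⟩

theorem polAlt_le_polInv_rotationsOf : polAlt (matricesOf G) n ≤ polInv (rotationsOf G) n := by
  intro P hP
  rw [mem_polAlt_iff] at hP
  refine mem_polInv_iff.mpr ⟨hP.1, ?_⟩
  rintro _ ⟨g, hg, hgdet, rfl⟩
  rw [hP.2 _ ⟨g, hg, rfl⟩, hgdet, one_smul]

theorem polInv_rotationsOf_eq_sup
    (hG : ∀ g ∈ G, (g : Matrix ι ι ℝ).det = 1 ∨ (g : Matrix ι ι ℝ).det = -1)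
    (hs : s ∈ G) (hdet : (s : Matrix ι ι ℝ).det = -1) :
    polInv (rotationsOf G) n = polInv (matricesOf G) n ⊔ polAlt (matricesOf G) n := by
  refine le_antisymm (fun P hP => ?_)
    (sup_le polInv_le_polInv_rotationsOf polAlt_le_polInv_rotationsOf)
  have hsplit : P = (2⁻¹ : ℝ) • (P + matrixActHom (s : Matrix ι ι ℝ) P) +
      (2⁻¹ : ℝ) • (P - matrixActHom (s : Matrix ι ι ℝ) P) := by module
  rw [hsplit]
  exact Submodule.add_mem_sup
    (Submodule.smul_mem _ _ (add_matrixActHom_mem_polInv hG hs hdet hP))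
    (Submodule.smul_mem _ _ (sub_matrixActHom_mem_polAlt hG hs hdet hP))

theorem disjoint_polInv_polAlt (hs : s ∈ G) (hdet : (s : Matrix ι ι ℝ).det = -1) :
    Disjoint (polInv (matricesOf G) n) (polAlt (matricesOf G) n) := by
  refine Submodule.disjoint_def.mpr fun P hinv halt => ?_
  have hsP := (mem_polAlt_iff.mp halt).2 _ ⟨s, hs, rfl⟩
  rw [(mem_polInv_iff.mp hinv).2 _ ⟨s, hs, rfl⟩, hdet, neg_one_smul] at hsP
  exact self_eq_neg.mp hsP

theorem hilbertSeries_polInv_rotationsOf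
    (hG : ∀ g ∈ G, (g : Matrix ι ι ℝ).det = 1 ∨ (g : Matrix ι ι ℝ).det = -1)
    (hs : s ∈ G) (hdet : (s : Matrix ι ι ℝ).det = -1) :
    hilbertSeries (polInv (rotationsOf G)) =
      hilbertSeries (polInv (matricesOf G)) + hilbertSeries (polAlt (matricesOf G)) :=
  hilbertSeries_eq_add_of_disjoint (fun _ => polInv_rotationsOf_eq_sup hG hs hdet)
    fun _ => disjoint_polInv_polAlt hs hdet

end SemiInvariants

section Reflection

variable {ι : Type} [Fintype ι] [DecidableEq ι]

/-- The matrix `1 - 2 α αᵀ / (α, α)` of the orthogonal reflection along `α`; it is `1` if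
`α = 0`. -/
def reflectionMatrix (α : ι → ℝ) : Matrix ι ι ℝ :=
  1 - (2 / (α ⬝ᵥ α)) • vecMulVec α α

theorem reflectionMatrix_mulVec (α x : ι → ℝ) :
    reflectionMatrix α *ᵥ x = x - (2 * (x ⬝ᵥ α) / (α ⬝ᵥ α)) • α := by
  rw [reflectionMatrix, sub_mulVec, one_mulVec, smul_mulVec, vecMulVec_mulVec, dotProduct_comm x α]
  ext i
  simp only [op_smul_eq_smul, Pi.sub_apply, Pi.smul_apply, smul_eq_mul]
  ring

theorem transpose_reflectionMatrix (α : ι → ℝ) : (reflectionMatrix α)ᵀ = reflectionMatrix α := by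
  rw [reflectionMatrix, transpose_sub, transpose_one, transpose_smul, transpose_vecMulVec]

theorem reflectionMatrix_mul_self (α : ι → ℝ) : reflectionMatrix α * reflectionMatrix α = 1 := by
  have hcoef : 2 / (α ⬝ᵥ α) * (2 / (α ⬝ᵥ α) * (α ⬝ᵥ α)) = 2 / (α ⬝ᵥ α) + 2 / (α ⬝ᵥ α) := by
    rcases eq_or_ne (α ⬝ᵥ α) 0 with h | h
    · simp [h]
    · rw [div_mul_cancel₀ _ h, mul_two]
  simp only [reflectionMatrix, sub_mul, mul_sub, one_mul, mul_one, smul_mul_smul_comm,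
    vecMulVec_mul_vecMulVec, vecMulVec_smul]
  rw [smul_smul, mul_assoc, hcoef, add_smul]
  abel

theorem reflectionMatrix_mem_orthogonalGroup (α : ι → ℝ) :
    reflectionMatrix α ∈ orthogonalGroup ι ℝ := by
  rw [mem_orthogonalGroup_iff, transpose_reflectionMatrix, reflectionMatrix_mul_self]

theorem det_reflectionMatrix {α : ι → ℝ} (hα : α ≠ 0) : (reflectionMatrix α).det = -1 := by
  have hαα : α ⬝ᵥ α ≠ 0 := dotProduct_self_eq_zero.not.mpr hα
  rw [reflectionMatrix, ← smul_vecMulVec, vecMulVec_eq Unit, det_one_sub_mul_comm]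
  rw [det_unique, Matrix.sub_apply, one_apply_eq, replicateRow_mul_replicateCol_apply,
    dotProduct_smul, smul_eq_mul, div_mul_cancel₀ _ hαα]
  norm_num

/-- The reflection along `α` as an invertible matrix. -/
def reflectionUnit (α : ι → ℝ) : (Matrix ι ι ℝ)ˣ :=
  ⟨reflectionMatrix α, reflectionMatrix α, reflectionMatrix_mul_self α, reflectionMatrix_mul_self α⟩

theorem matrixActHom_reflectionMatrix_linearForm (α v : ι → ℝ) :
    matrixActHom (reflectionMatrix α) (linearForm v) = linearForm (reflectionMatrix α *ᵥ v) := by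
  rw [matrixActHom_linearForm, inv_eq_right_inv (reflectionMatrix_mul_self α),
    ← mulVec_transpose, transpose_reflectionMatrix]

theorem linearForm_dvd_sub_matrixActHom (α : ι → ℝ) (P : MvPolynomial ι ℝ) :
    linearForm α ∣ P - matrixActHom (reflectionMatrix α) P := by
  refine dvd_sub_algHom (fun i => ?_) P
  rw [← linearForm_single, matrixActHom_reflectionMatrix_linearForm, ← map_sub,
    reflectionMatrix_mulVec, sub_sub_cancel, map_smul]
  exact dvd_smul_of_dvd _ dvd_rfl

theorem linearForm_dvd_of_matrixActHom_eq_neg {α : ι → ℝ} {P : MvPolynomial ι ℝ}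
    (hP : matrixActHom (reflectionMatrix α) P = -P) : linearForm α ∣ P := by
  have hdvd := linearForm_dvd_sub_matrixActHom α ((2⁻¹ : ℝ) • P)
  rwa [map_smul, hP, show (2⁻¹ : ℝ) • P - (2⁻¹ : ℝ) • -P = P by module] at hdvd

end Reflection

section WeylGroup

variable {d : ℕ}

theorem reflectionMatrix_mulVec_eq_rootReflection (α x : Fin d → ℝ) :
    reflectionMatrix α *ᵥ x = rootReflection α x :=
  reflectionMatrix_mulVec α x

variable {R : Finset (Fin d → ℝ)}

theorem weylGroup_eq_closure_image :
    weylGroup R = Subgroup.closure (reflectionUnit '' (R : Set (Fin d → ℝ))) := by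
  refine congrArg Subgroup.closure (Set.ext fun g => exists_congr fun α => and_congr_right' ?_)
  simp_rw [← reflectionMatrix_mulVec_eq_rootReflection, ← Matrix.ext_iff_mulVec]
  exact ⟨fun h => Units.ext h.symm, fun h => congrArg Units.val h.symm⟩

theorem reflectionUnit_mem_weylGroup {α : Fin d → ℝ} (hα : α ∈ R) :
    reflectionUnit α ∈ weylGroup R := by
  rw [weylGroup_eq_closure_image]
  exact Subgroup.subset_closure ⟨α, hα, rfl⟩

theorem reflectionMatrix_mem_weylSet {α : Fin d → ℝ} (hα : α ∈ R) :
    reflectionMatrix α ∈ weylSet R :=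
  ⟨reflectionUnit α, reflectionUnit_mem_weylGroup hα, rfl⟩

theorem mem_orthogonalGroup_of_mem_weylGroup {g : (Matrix (Fin d) (Fin d) ℝ)ˣ}
    (hg : g ∈ weylGroup R) :
    (g : Matrix (Fin d) (Fin d) ℝ) ∈ orthogonalGroup (Fin d) ℝ := by
  suffices weylGroup R ≤ (orthogonalGroup (Fin d) ℝ).units from (this hg).1
  rw [weylGroup_eq_closure_image, Subgroup.closure_le]
  rintro _ ⟨α, _, rfl⟩
  exact ⟨reflectionMatrix_mem_orthogonalGroup α, reflectionMatrix_mem_orthogonalGroup α⟩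

theorem mem_polInv_weylSet_iff {n : ℕ} {P : MvPolynomial (Fin d) ℝ} :
    P ∈ polInv (weylSet R) n ↔
      P.IsHomogeneous n ∧ ∀ α ∈ R, matrixActHom (reflectionMatrix α) P = P := by
  rw [mem_polInv_iff]
  refine and_congr_right' ⟨fun h α hα => h _ (reflectionMatrix_mem_weylSet hα), fun h => ?_⟩
  rintro _ ⟨g, hg, rfl⟩
  rw [weylGroup_eq_closure_image] at hg
  simpa using matrixActHom_eq_smul_of_mem_closure 1 (by simpa [reflectionUnit] using h) hg

theorem mem_polAlt_weylSet_iff (hzero : 0 ∉ R) {n : ℕ} {P : MvPolynomial (Fin d) ℝ} :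
    P ∈ polAlt (weylSet R) n ↔
      P.IsHomogeneous n ∧ ∀ α ∈ R, matrixActHom (reflectionMatrix α) P = -P := by
  have hdet (α) (hα : α ∈ R) : (reflectionMatrix α).det = -1 :=
    det_reflectionMatrix (ne_of_mem_of_not_mem hα hzero)
  rw [mem_polAlt_iff]
  refine and_congr_right' ⟨fun h α hα => ?_, fun h => ?_⟩
  · rw [h _ (reflectionMatrix_mem_weylSet hα), hdet α hα, neg_one_smul]
  · rintro _ ⟨g, hg, rfl⟩
    rw [weylGroup_eq_closure_image] at hg
    refine matrixActHom_eq_smul_of_mem_closure (Units.map detMonoidHom) ?_ hg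
    rintro _ ⟨α, hα, rfl⟩
    exact (h α hα).trans (by simp [reflectionUnit, hdet α hα])

theorem hilbertSeries_polInv_weylPlusSet (hzero : 0 ∉ R) (hne : R.Nonempty) :
    hilbertSeries (polInv (weylPlusSet R)) =
      hilbertSeries (polInv (weylSet R)) + hilbertSeries (polAlt (weylSet R)) := by
  obtain ⟨α, hα⟩ := hne
  refine hilbertSeries_polInv_rotationsOf (fun g hg => ?_) (reflectionUnit_mem_weylGroup hα)
    (det_reflectionMatrix (ne_of_mem_of_not_mem hα hzero))
  exact mul_self_eq_one_iff.mp
    (det_of_mem_unitary (mem_orthogonalGroup_of_mem_weylGroup hg)).1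

end WeylGroup

section RootSystem

variable {d : ℕ}

/-- A finite reduced root system in `ℝ^d`, not required to be crystallographic or to span. -/
structure IsReducedRootSystem (R : Finset (Fin d → ℝ)) : Prop where
  zero_notMem : 0 ∉ R
  rootReflection_mem : ∀ α ∈ R, ∀ β ∈ R, rootReflection α β ∈ R
  eq_or_eq_neg_of_smul_mem : ∀ α ∈ R, ∀ t : ℝ, t • α ∈ R → t • α = α ∨ t • α = -α

theorem rootReflection_self (α : Fin d → ℝ) : rootReflection α α = -α := by
  rcases eq_or_ne α 0 with rfl | hα
  · simp [rootReflection]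
  · have hαα : dotP α α ≠ 0 := dotProduct_self_eq_zero.not.mpr hα
    rw [rootReflection, mul_div_cancel_right₀ _ hαα, two_smul, sub_add_cancel_left]

theorem rootReflection_involutive (α : Fin d → ℝ) : Function.Involutive (rootReflection α) :=
  fun x => by
    simp only [← reflectionMatrix_mulVec_eq_rootReflection]
    rw [mulVec_mulVec, reflectionMatrix_mul_self, one_mulVec]

open Classical in
/-- The roots which are positive for the lexicographic order of `ℝ^d`. -/
def posRoots (R : Finset (Fin d → ℝ)) : Finset (Fin d → ℝ) :=
  R.filter fun α => 0 < toLex α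

theorem mem_posRoots_iff {R : Finset (Fin d → ℝ)} {α : Fin d → ℝ} :
    α ∈ posRoots R ↔ α ∈ R ∧ 0 < toLex α := by
  classical exact Finset.mem_filter

/-- The product of the positive roots, viewed as linear forms. -/
def rootProduct (R : Finset (Fin d → ℝ)) : MvPolynomial (Fin d) ℝ :=
  ∏ α ∈ posRoots R, linearForm α

theorem isHomogeneous_rootProduct (R : Finset (Fin d → ℝ)) :
    (rootProduct R).IsHomogeneous (posRoots R).card := by
  simpa [rootProduct] using IsHomogeneous.prod (posRoots R) linearForm (fun _ => 1)
    fun α _ => isHomogeneous_linearForm α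

namespace IsReducedRootSystem

variable {R : Finset (Fin d → ℝ)} (hR : IsReducedRootSystem R)
include hR

theorem ne_zero {α : Fin d → ℝ} (hα : α ∈ R) : α ≠ 0 :=
  ne_of_mem_of_not_mem hα hR.zero_notMem

theorem neg_mem {α : Fin d → ℝ} (hα : α ∈ R) : -α ∈ R :=
  rootReflection_self α ▸ hR.rootReflection_mem α hα α hα

theorem neg_mem_posRoots_iff {α : Fin d → ℝ} (hα : α ∈ R) :
    -α ∈ posRoots R ↔ α ∉ posRoots R := by
  have hne : toLex α ≠ 0 := hR.ne_zero hα
  simp only [mem_posRoots_iff, hα, hR.neg_mem hα, true_and, toLex_neg, neg_pos]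
  exact (not_lt.trans hne.le_iff_lt).symm

@[to_additive]
theorem prod_eq_prod_posRoots {M : Type*} [CommMonoid M] (f : (Fin d → ℝ) → M) :
    ∏ α ∈ R, f α = ∏ α ∈ posRoots R, f α * f (-α) := by
  classical
  have hsubset : posRoots R ⊆ R := fun α hα => (mem_posRoots_iff.mp hα).1
  rw [← Finset.prod_sdiff hsubset, Finset.prod_mul_distrib, mul_comm]
  congr 1
  refine Finset.prod_nbij' Neg.neg Neg.neg (fun α hα => ?_) (fun α hα => ?_)
    (fun α _ => neg_neg α) (fun α _ => neg_neg α) fun α _ => by rw [neg_neg]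
  · rw [Finset.mem_sdiff] at hα
    exact (hR.neg_mem_posRoots_iff hα.1).mpr hα.2
  · have hαR := hR.neg_mem (hsubset hα)
    refine Finset.mem_sdiff.mpr ⟨hαR, (hR.neg_mem_posRoots_iff hαR).mp ?_⟩
    rwa [neg_neg]

theorem card_div_two : R.card / 2 = (posRoots R).card := by
  have hcard := hR.sum_eq_sum_posRoots fun _ => 1
  rw [Finset.sum_const, Finset.sum_const, smul_eq_mul, smul_eq_mul] at hcard
  lia

theorem isRelPrime_linearForm {α β : Fin d → ℝ} (hα : α ∈ posRoots R) (hβ : β ∈ posRoots R)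
    (hne : α ≠ β) : IsRelPrime (linearForm α) (linearForm β) := by
  obtain ⟨hαR, hαpos⟩ := mem_posRoots_iff.mp hα
  obtain ⟨hβR, hβpos⟩ := mem_posRoots_iff.mp hβ
  refine (prime_linearForm (hR.ne_zero hαR)).irreducible.isRelPrime_iff_not_dvd.mpr fun hdvd => ?_
  obtain ⟨c, rfl⟩ := exists_eq_smul_of_linearForm_dvd (hR.ne_zero hβR) hdvd
  rcases hR.eq_or_eq_neg_of_smul_mem α hαR c hβR with h | h
  · exact hne h.symm
  · rw [h, toLex_neg] at hβpos
    exact (neg_pos.mp hβpos).not_gt hαpos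

theorem pairwise_isRelPrime_linearForm :
    Set.Pairwise (posRoots R : Set (Fin d → ℝ)) (IsRelPrime.onFun linearForm) :=
  fun _ hα _ hβ => hR.isRelPrime_linearForm hα hβ

theorem squarefree_rootProduct : Squarefree (rootProduct R) :=
  Finset.squarefree_prod_of_pairwise_isCoprime hR.pairwise_isRelPrime_linearForm fun _ hα =>
    (prime_linearForm (hR.ne_zero (mem_posRoots_iff.mp hα).1)).squarefree

theorem linearForm_dvd_rootProduct {α : Fin d → ℝ} (hα : α ∈ R) :
    linearForm α ∣ rootProduct R := by
  by_cases hpos : α ∈ posRoots R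
  · exact Finset.dvd_prod_of_mem _ hpos
  · rw [← neg_dvd, ← map_neg]
    exact Finset.dvd_prod_of_mem _ ((hR.neg_mem_posRoots_iff hα).mpr hpos)

theorem prod_linearForm_eq :
    ∏ α ∈ R, linearForm α = (-1) ^ (posRoots R).card * rootProduct R ^ 2 := by
  rw [hR.prod_eq_prod_posRoots, rootProduct, ← Finset.prod_pow, ← Finset.prod_const,
    ← Finset.prod_mul_distrib]
  exact Finset.prod_congr rfl fun α _ => by rw [map_neg]; ring

theorem matrixActHom_prod_linearForm {β : Fin d → ℝ} (hβ : β ∈ R) :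
    matrixActHom (reflectionMatrix β) (∏ α ∈ R, linearForm α) = ∏ α ∈ R, linearForm α := by
  rw [map_prod]
  refine Finset.prod_nbij' (rootReflection β) (rootReflection β) (hR.rootReflection_mem β hβ)
    (hR.rootReflection_mem β hβ) (fun α _ => rootReflection_involutive β α)
    (fun α _ => rootReflection_involutive β α) fun α _ => ?_
  rw [matrixActHom_reflectionMatrix_linearForm, reflectionMatrix_mulVec_eq_rootReflection]

theorem matrixActHom_rootProduct_eq_or_eq_neg {β : Fin d → ℝ} (hβ : β ∈ R) :
    matrixActHom (reflectionMatrix β) (rootProduct R) = rootProduct R ∨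
      matrixActHom (reflectionMatrix β) (rootProduct R) = -rootProduct R := by
  have hprod := hR.matrixActHom_prod_linearForm hβ
  rw [hR.prod_linearForm_eq, map_mul, map_pow, map_pow, map_neg, map_one] at hprod
  rw [← sq_eq_sq_iff_eq_or_eq_neg]
  exact mul_left_cancel₀ (pow_ne_zero _ (neg_ne_zero.mpr one_ne_zero)) hprod

theorem matrixActHom_rootProduct {β : Fin d → ℝ} (hβ : β ∈ R) :
    matrixActHom (reflectionMatrix β) (rootProduct R) = -rootProduct R := by
  refine (hR.matrixActHom_rootProduct_eq_or_eq_neg hβ).resolve_left fun hfix => ?_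
  have hprime := prime_linearForm (hR.ne_zero hβ)
  obtain ⟨Q, hQ⟩ := hR.linearForm_dvd_rootProduct hβ
  have hanti : matrixActHom (reflectionMatrix β) Q = -Q := by
    rw [hQ, map_mul, matrixActHom_reflectionMatrix_linearForm,
      reflectionMatrix_mulVec_eq_rootReflection, rootReflection_self, map_neg, neg_mul,
      ← mul_neg] at hfix
    exact neg_eq_iff_eq_neg.mp (mul_left_cancel₀ hprime.ne_zero hfix)
  have hsq : linearForm β * linearForm β ∣ rootProduct R :=
    hQ ▸ mul_dvd_mul_left _ (linearForm_dvd_of_matrixActHom_eq_neg hanti)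
  exact hprime.not_isUnit (hR.squarefree_rootProduct _ hsq)

theorem rootProduct_ne_zero : rootProduct R ≠ 0 := hR.squarefree_rootProduct.ne_zero

theorem rootProduct_dvd {P : MvPolynomial (Fin d) ℝ}
    (hP : ∀ α ∈ R, matrixActHom (reflectionMatrix α) P = -P) : rootProduct R ∣ P :=
  Finset.prod_dvd_of_isRelPrime hR.pairwise_isRelPrime_linearForm fun α hα =>
    linearForm_dvd_of_matrixActHom_eq_neg (hP α (mem_posRoots_iff.mp hα).1)

theorem rootProduct_mul_mem_polAlt_iff {n : ℕ} {Q : MvPolynomial (Fin d) ℝ} :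
    rootProduct R * Q ∈ polAlt (weylSet R) (n + (posRoots R).card) ↔ Q ∈ polInv (weylSet R) n := by
  have hact (α) (hα : α ∈ R) :
      matrixActHom (reflectionMatrix α) (rootProduct R * Q) = -(rootProduct R * Q) ↔
        matrixActHom (reflectionMatrix α) Q = Q := by
    rw [map_mul, hR.matrixActHom_rootProduct hα, neg_mul, neg_inj,
      mul_right_inj' hR.rootProduct_ne_zero]
  have hdeg : (rootProduct R * Q).IsHomogeneous (n + (posRoots R).card) ↔ Q.IsHomogeneous n := by
    rw [add_comm]
    exact ⟨isHomogeneous_of_mul_left (isHomogeneous_rootProduct R) hR.rootProduct_ne_zero,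
      (isHomogeneous_rootProduct R).mul⟩
  rw [mem_polAlt_weylSet_iff hR.zero_notMem, mem_polInv_weylSet_iff, hdeg]
  exact and_congr_right' (forall₂_congr hact)

theorem polAlt_weylSet_add (n : ℕ) :
    polAlt (weylSet R) (n + (posRoots R).card) =
      (polInv (weylSet R) n).map (LinearMap.mulLeft ℝ (rootProduct R)) := by
  ext P
  rw [Submodule.mem_map]
  refine ⟨fun hP => ?_, ?_⟩
  · obtain ⟨Q, rfl⟩ := hR.rootProduct_dvd ((mem_polAlt_weylSet_iff hR.zero_notMem).mp hP).2
    exact ⟨Q, hR.rootProduct_mul_mem_polAlt_iff.mp hP, rfl⟩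
  · rintro ⟨Q, hQ, rfl⟩
    exact hR.rootProduct_mul_mem_polAlt_iff.mpr hQ

theorem polAlt_weylSet_eq_bot {n : ℕ} (hn : n < (posRoots R).card) : polAlt (weylSet R) n = ⊥ := by
  refine (Submodule.eq_bot_iff _).mpr fun P hP => ?_
  rw [mem_polAlt_weylSet_iff hR.zero_notMem] at hP
  obtain ⟨Q, rfl⟩ := hR.rootProduct_dvd hP.2
  exact mul_eq_zero_of_isHomogeneous_of_lt (isHomogeneous_rootProduct R) hP.1 hn

theorem hilbertSeries_polAlt :
    hilbertSeries (polAlt (weylSet R)) =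
      PowerSeries.X ^ (R.card / 2) * hilbertSeries (polInv (weylSet R)) := by
  rw [hR.card_div_two]
  refine hilbertSeries_eq_X_pow_mul (fun _ => hR.polAlt_weylSet_eq_bot) fun n => ?_
  rw [hR.polAlt_weylSet_add]
  exact (Submodule.equivMapOfInjective _ (mul_right_injective₀ hR.rootProduct_ne_zero)
    _).finrank_eq.symm

end IsReducedRootSystem

end RootSystem

theorem eq_or_eq_neg_of_smul_mem_of_reduced {d : ℕ} {R : Finset (Fin d → ℝ)}
    (hred : ∀ α ∈ R, {β | β ∈ R ∧ ∃ t : ℝ, β = t • α} = ({α, -α} : Set (Fin d → ℝ))) :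
    ∀ α ∈ R, ∀ t : ℝ, t • α ∈ R → t • α = α ∨ t • α = -α := by
  intro α hα t ht
  have hmem : t • α ∈ {β | β ∈ R ∧ ∃ t : ℝ, β = t • α} := ⟨ht, t, rfl⟩
  rwa [hred α hα] at hmem

theorem nonempty_of_span_eq_top {d : ℕ} (hd : 1 ≤ d) {R : Finset (Fin d → ℝ)}
    (hspan : Submodule.span ℝ (R : Set (Fin d → ℝ)) = ⊤) : R.Nonempty := by
  rw [Finset.nonempty_iff_ne_empty]
  rintro rfl
  have : Nontrivial (Fin d → ℝ) := Function.nontrivial (h := ⟨⟨0, hd⟩⟩)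
  simp at hspan

theorem statement0_general {d : ℕ} {R : Finset (Fin d → ℝ)} (hR : IsReducedRootSystem R)
    (hne : R.Nonempty) :
    hilbertSeries (harmInv (weylPlusSet R)) =
      (1 - PowerSeries.X ^ 2) * (1 + PowerSeries.X ^ (R.card / 2)) *
        hilbertSeries (polInv (weylSet R)) := by
  obtain ⟨α, hα⟩ := hne
  have : Nonempty (Fin d) := (Function.ne_iff.mp (hR.ne_zero hα)).nonempty
  have horth : ∀ g ∈ weylPlusSet R, g ∈ orthogonalGroup (Fin d) ℝ := by
    rintro _ ⟨g, hg, _, rfl⟩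
    exact mem_orthogonalGroup_of_mem_weylGroup hg
  rw [hilbertSeries_harmInv horth, hilbertSeries_polInv_weylPlusSet hR.zero_notMem ⟨α, hα⟩,
    hR.hilbertSeries_polAlt]
  ring

/-- For a reduced crystallographic root system `R` spanning `ℝ^d`, the generating series of the
dimensions of the `W(R)⁺`-invariant harmonic polynomials is
`(1 - t²) (1 + t^{|R|/2}) P_R(t)` where `P_R` is the generating series of the dimensions of the
`W(R)`-invariant polynomials. -/
theorem statement0 {d : ℕ} (hd : 1 ≤ d) (R : Finset (Fin d → ℝ))
    (hzero : (0 : Fin d → ℝ) ∉ R)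
    (hspan : Submodule.span ℝ (R : Set (Fin d → ℝ)) = ⊤)
    (hcrys : ∀ α ∈ R, ∀ β ∈ R, ∃ k : ℤ, 2 * dotP β α / dotP α α = (k : ℝ))
    (hrefl : ∀ α ∈ R, ∀ β ∈ R, rootReflection α β ∈ R)
    (hred : ∀ α ∈ R, {β | β ∈ R ∧ ∃ t : ℝ, β = t • α} = ({α, -α} : Set (Fin d → ℝ))) :
    (PowerSeries.mk fun n => (Module.finrank ℝ ↥(harmInv (weylPlusSet R) n) : ℤ)) =
      (1 - PowerSeries.X ^ 2) * (1 + PowerSeries.X ^ (R.card / 2)) *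
        PowerSeries.mk fun n => (Module.finrank ℝ ↥(polInv (weylSet R) n) : ℤ) := by
  have hR : IsReducedRootSystem R := ⟨hzero, hrefl, eq_or_eq_neg_of_smul_mem_of_reduced hred⟩
  exact statement0_general hR (nonempty_of_span_eq_top hd hspan)
end
end

section
/- Let L be a locally compact Hausdorff topological group and let ν : L → ℝ_{>0} be a continuous surjective group homomorphism such that: (a) ker ν equals D(L), the closure of the commutator subgroup of L; (b) the induced group isomorphism L/ker ν → ℝ_{>0} is a homeomorphism; (c) ker ν is compact. Let C denote the identity component of the center of L. Then: (i) C ∩ ker ν = {1} and L = C · ker ν, so that the multiplication map C × ker ν → L, (c,k) ↦ ck, is an isomorphism of topological groups; (ii) ν restricts to an isomorphism of topological groups C → ℝ_{>0}; (iii) ker ν equals the closure of its own commutator subgroup, i.e. D(ker ν) = ker ν. -/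
noncomputable section

/-- The multiplicative topological group of positive real numbers. -/
abbrev PosReal : Type := {x : ℝ // (0 : ℝ) < x}

/-- The identity component of the center of `L`, viewed as a subgroup of `L`. -/
def centerIdentityComponent (L : Type*) [Group L] [TopologicalSpace L] [IsTopologicalGroup L] :
    Subgroup L :=
  (Subgroup.connectedComponentOfOne ↥(Subgroup.center L)).map (Subgroup.center L).subtype

/-!
Write `K = ker ν`. The main point is that `L = K · Z_L(K)`. Let `ρ` be a finite-dimensional
unitary representation of the compact group `K`. For `l` close to `1`, averaging over `K` produces
an invertible intertwiner `u` between `ρ` and its conjugate by `l`; it lies near `1` in the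
normalizer of the compact linear group `ρ(K)`. By Cartan's theorem `u = exp X` with `X` in the Lie
algebra of the normalizer, and averaging `X` over `ρ(K)` splits it as a sum of commuting elements of
`Lie ρ(K)` and of the commutant of `ρ(K)`, so `l ∈ K · Z_L(K mod ker ρ)`. Connectedness of `L / K`
extends this to all `l`, and compactness of `K` together with the Peter–Weyl theorem removes `ρ`.

The group `Z_L(K)` is an extension of `ℝ_{>0}` by a central subgroup. Two of its elements commute as
soon as their images are rational powers of one another, hence always by density; so
`Z_L(K) ≤ Z(L)` and `L = K · Z(L)`. Commutators of `L` are then commutators of `K`, which gives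
`D(K) = K`. Consequently one-dimensional characters of `K` are trivial, and taking determinants on
eigenspaces shows that the center of `K` acts in every representation of dimension `d` with
eigenvalues that are `d!`-th roots of unity; so the center of `K` is totally disconnected.

Finally `ν : Z(L) → ℝ_{>0}` is proper and surjective with profinite kernel. The elements of `Z(L)`
having roots of all orders form a closed subgroup that meets this kernel trivially and, by
compactness of the fibres, surjects onto `ℝ_{>0}`. This subgroup is the identity component of
`Z(L)`.
-/

section Exponential

open NormedSpace Filter Topology

variable {A : Type*} [NormedRing A] [NormedAlgebra ℝ A] [CompleteSpace A]

/-- The exponential of a real Banach algebra, as a map into the group of units. -/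
def expUnit (x : A) : Aˣ where
  val := exp x
  inv := exp (-x)
  val_inv := by
    let _ : NormedAlgebra ℚ A := NormedAlgebra.restrictScalars ℚ ℝ A
    rw [← exp_add_of_commute (Commute.refl x).neg_right, add_neg_cancel, exp_zero]
  inv_val := by
    let _ : NormedAlgebra ℚ A := NormedAlgebra.restrictScalars ℚ ℝ A
    rw [← exp_add_of_commute (Commute.refl x).neg_left, neg_add_cancel, exp_zero]

@[simp]
lemma val_expUnit (x : A) : (expUnit x : A) = exp x := rfl

lemma expUnit_zero : expUnit (0 : A) = 1 := Units.ext exp_zero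

lemma expUnit_neg (x : A) : expUnit (-x) = (expUnit x)⁻¹ := Units.ext rfl

lemma continuous_expUnit : Continuous (expUnit : A → Aˣ) := by
  let _ : NormedAlgebra ℚ A := NormedAlgebra.restrictScalars ℚ ℝ A
  exact Units.continuous_iff.mpr ⟨exp_continuous, exp_continuous.comp continuous_neg⟩

lemma expUnit_add_of_commute {x y : A} (h : Commute x y) :
    expUnit (x + y) = expUnit x * expUnit y := by
  let _ : NormedAlgebra ℚ A := NormedAlgebra.restrictScalars ℚ ℝ A
  exact Units.ext (exp_add_of_commute h)

lemma expUnit_zsmul (n : ℤ) (x : A) : expUnit (n • x) = expUnit x ^ n := by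
  let _ : NormedAlgebra ℚ A := NormedAlgebra.restrictScalars ℚ ℝ A
  have nat_case (m : ℕ) (y : A) : expUnit (m • y) = expUnit y ^ m :=
    Units.ext (by simpa only [Units.val_pow_eq_pow_val, val_expUnit] using exp_nsmul m y)
  obtain ⟨m, rfl | rfl⟩ := n.eq_nat_or_neg
  · rw [natCast_zsmul, zpow_natCast, nat_case]
  · rw [neg_smul, natCast_zsmul, expUnit_neg, zpow_neg, zpow_natCast, nat_case]

lemma expUnit_conj (u : Aˣ) (x : A) : expUnit (u * x * ↑u⁻¹) = u * expUnit x * u⁻¹ := by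
  let _ : NormedAlgebra ℚ A := NormedAlgebra.restrictScalars ℚ ℝ A
  exact Units.ext (exp_units_conj u x)

lemma hasDerivAt_expUnit_smul (x : A) :
    HasDerivAt (fun t : ℝ => (expUnit (t • x) : A)) x 0 := by
  simpa [val_expUnit] using hasDerivAt_exp_smul_const (𝕂 := ℝ) x 0

lemma exists_hasFDerivAt_right_inverse_exp :
    ∃ log : A → A, log 1 = 0 ∧ HasFDerivAt log (.id ℝ A) 1 ∧ ∀ᶠ a in 𝓝 1, exp (log a) = a := by
  have hexp : HasStrictFDerivAt (exp : A → A)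
      (ContinuousLinearEquiv.refl ℝ A : A →L[ℝ] A) 0 := hasStrictFDerivAt_exp_zero
  refine ⟨hexp.localInverse _ _ _, ?_, ?_, ?_⟩
  · simpa using hexp.localInverse_apply_image
  · simpa using hexp.to_localInverse.hasFDerivAt
  · simpa using hexp.eventually_right_inverse

lemma tendsto_floor_div_mul {ι : Type*} {l : Filter ι} {b : ι → ℝ}
    (hb : Tendsto b l (𝓝[≠] 0)) (r : ℝ) : Tendsto (fun i => ⌊r / b i⌋ * b i) l (𝓝 r) := by
  have hb_ne : ∀ᶠ i in l, b i ≠ 0 := hb.eventually self_mem_nhdsWithin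
  have hb_zero : Tendsto b l (𝓝 0) := hb.mono_right nhdsWithin_le_nhds
  have hfract : Tendsto (fun i => Int.fract (r / b i) * b i) l (𝓝 0) := by
    refine squeeze_zero_norm (fun i => ?_) (by simpa using hb_zero.norm)
    rw [norm_mul, Real.norm_of_nonneg (Int.fract_nonneg _)]
    exact mul_le_of_le_one_left (norm_nonneg _) (Int.fract_lt_one _).le
  refine (by simpa using hfract.const_sub r : Tendsto _ l (𝓝 r)).congr' ?_
  filter_upwards [hb_ne] with i hi
  rw [Int.fract, sub_mul, div_mul_cancel₀ r hi, sub_sub_cancel]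

lemma expUnit_smul_mem_of_tendsto {H : Subgroup Aˣ} (hH : IsClosed (H : Set Aˣ))
    {ι : Type*} {l : Filter ι} [l.NeBot] {u : ι → Aˣ} (hu : ∀ᶠ i in l, u i ∈ H)
    {b : ι → ℝ} (hb : Tendsto b l (𝓝[≠] 0)) {X : A}
    (hX : Tendsto (fun i => (b i)⁻¹ • ((u i : A) - 1)) l (𝓝 X)) (r : ℝ) :
    expUnit (r • X) ∈ H := by
  obtain ⟨log, log_one, hlog, exp_log⟩ := exists_hasFDerivAt_right_inverse_exp (A := A)
  have hb_ne : ∀ᶠ i in l, b i ≠ 0 := hb.eventually self_mem_nhdsWithin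
  have hu_sub : Tendsto (fun i => (u i : A) - 1) l (𝓝 0) := by
    have := (hb.mono_right nhdsWithin_le_nhds).smul hX
    rw [zero_smul] at this
    refine this.congr' ?_
    filter_upwards [hb_ne] with i hi using smul_inv_smul₀ hi _
  have hu_one : Tendsto (fun i => (u i : A)) l (𝓝 1) := by simpa using hu_sub.add_const 1
  have hlogX : Tendsto (fun i => (b i)⁻¹ • log (u i)) l (𝓝 X) := by
    simpa [log_one] using
      hlog.hasFDerivWithinAt.lim (s := Set.univ) hu_sub (.of_forall fun _ => Set.mem_univ _) hX
  have hpow : ∀ᶠ i in l, expUnit ((⌊r / b i⌋ * b i) • (b i)⁻¹ • log (u i)) = u i ^ ⌊r / b i⌋ := by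
    filter_upwards [hb_ne, hu_one.eventually exp_log] with i hi hexp
    rw [mul_smul, smul_inv_smul₀ hi, Int.cast_smul_eq_zsmul, expUnit_zsmul,
      show expUnit (log (u i)) = u i from Units.ext hexp]
  refine hH.mem_of_tendsto
    ((continuous_expUnit.tendsto _).comp ((tendsto_floor_div_mul hb r).smul hlogX)) ?_
  filter_upwards [hu, hpow] with i hi hpow_i
  simpa only [Function.comp_apply, SetLike.mem_coe, hpow_i] using zpow_mem hi _

lemma expUnit_smul_mem_of_hasDerivAt {H : Subgroup Aˣ} (hH : IsClosed (H : Set Aˣ))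
    {γ : ℝ → Aˣ} (hγ : ∀ t, γ t ∈ H) (hγ₀ : γ 0 = 1) {X : A}
    (hX : HasDerivAt (fun t => (γ t : A)) X 0) (r : ℝ) : expUnit (r • X) ∈ H := by
  refine expUnit_smul_mem_of_tendsto hH (.of_forall hγ) tendsto_id ?_ r
  simpa [hγ₀] using hasDerivAt_iff_tendsto_slope_zero.mp hX

/-- The Lie algebra of a closed subgroup `H` of the units of a real Banach algebra: the directions
of the one-parameter subgroups contained in `H`. -/
def lieAlgebra (H : Subgroup Aˣ) (hH : IsClosed (H : Set Aˣ)) : Submodule ℝ A where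
  carrier := {X | ∀ t : ℝ, expUnit (t • X) ∈ H}
  zero_mem' t := by simp only [smul_zero, expUnit_zero, one_mem]
  add_mem' {X Y} hX hY := by
    refine expUnit_smul_mem_of_hasDerivAt hH (γ := fun t => expUnit (t • X) * expUnit (t • Y))
      (fun t => mul_mem (hX t) (hY t)) (by simp only [zero_smul, expUnit_zero, mul_one]) ?_
    simpa [expUnit_zero] using (hasDerivAt_expUnit_smul X).fun_mul (hasDerivAt_expUnit_smul Y)
  smul_mem' c X hX t := by
    rw [smul_smul]
    exact hX (t * c)

lemma expUnit_mem_of_mem_lieAlgebra {H : Subgroup Aˣ} {hH : IsClosed (H : Set Aˣ)} {X : A}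
    (hX : X ∈ lieAlgebra H hH) : expUnit X ∈ H := by
  simpa only [one_smul] using hX 1

lemma isClosed_lieAlgebra (H : Subgroup Aˣ) (hH : IsClosed (H : Set Aˣ)) :
    IsClosed (lieAlgebra H hH : Set A) := by
  have heq : (lieAlgebra H hH : Set A) = ⋂ t : ℝ, {X | expUnit (t • X) ∈ H} := by
    ext X
    simp only [Set.mem_iInter]
    rfl
  rw [heq]
  exact isClosed_iInter fun t => hH.preimage (continuous_expUnit.comp (continuous_const_smul t))

end Exponential

section Cartan

open NormedSpace Filter Topology

variable {A : Type*} [NormedRing A] [NormedAlgebra ℝ A] [CompleteSpace A]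

lemma map_exp_mul_exp_nhds_zero (P : A →L[ℝ] A) :
    map (fun x => exp (x - P x) * exp (P x)) (𝓝 (0 : A)) = 𝓝 1 := by
  have hexp (Q : A →L[ℝ] A) : HasStrictFDerivAt (fun x => exp (Q x)) Q (0 : A) := by
    have := hasStrictFDerivAt_exp_zero (𝕂 := ℝ) (𝔸 := A)
    rw [← map_zero Q] at this
    exact this.comp (0 : A) Q.hasStrictFDerivAt
  have hprod : HasStrictFDerivAt (fun x => exp (x - P x) * exp (P x))
      (ContinuousLinearEquiv.refl ℝ A : A →L[ℝ] A) 0 :=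
    ((hexp (.id ℝ A - P)).fun_mul' (hexp P)).congr_fderiv (by ext; simp)
  simpa using hprod.map_nhds_eq_of_equiv

variable [FiniteDimensional ℝ A] {H : Subgroup Aˣ} {hH : IsClosed (H : Set Aˣ)}

lemma eventually_eq_zero_of_expUnit_mem {V : Submodule ℝ A} (hV : Disjoint V (lieAlgebra H hH)) :
    ∀ᶠ x in 𝓝 (0 : A), x ∈ V → expUnit x ∈ H → x = 0 := by
  by_contra hfreq
  let bad : Set A := {x | ¬(x ∈ V → expUnit x ∈ H → x = 0)}
  have hne : (𝓝 0 ⊓ 𝓟 bad).NeBot := frequently_mem_iff_neBot.mp (not_eventually.mp hfreq)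
  let l : Ultrafilter A := .of (𝓝 0 ⊓ 𝓟 bad)
  have hl : (l : Filter A) ≤ 𝓝 0 ⊓ 𝓟 bad := Ultrafilter.of_le _
  have hbad : ∀ᶠ x in (l : Filter A), x ∈ V ∧ expUnit x ∈ H ∧ x ≠ 0 := by
    filter_upwards [le_principal_iff.mp (hl.trans inf_le_right)] with x hx
    simpa only [bad, Set.mem_ofPred_eq, not_forall, exists_prop] using hx
  have hzero : Tendsto id (l : Filter A) (𝓝 0) := hl.trans inf_le_left
  have hsphere : ∀ᶠ x in (l : Filter A), ‖x‖⁻¹ • x ∈ Metric.sphere (0 : A) 1 := by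
    filter_upwards [hbad] with x hx
    simp [norm_smul, hx.2.2]
  have : ProperSpace A := FiniteDimensional.proper ℝ A
  obtain ⟨Y, hY, hlY⟩ := (isCompact_sphere (0 : A) 1).ultrafilter_le_nhds
    (l.map fun x => ‖x‖⁻¹ • x) (le_principal_iff.mpr hsphere)
  replace hlY : Tendsto (fun x => ‖x‖⁻¹ • x) (l : Filter A) (𝓝 Y) := hlY
  have hYV : Y ∈ V := V.closed_of_finiteDimensional.mem_of_tendsto hlY <| by
    filter_upwards [hbad] with x hx using V.smul_mem _ hx.1
  have hYH : Y ∈ lieAlgebra H hH := by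
    refine expUnit_smul_mem_of_tendsto (u := expUnit) (b := norm) hH
      (hbad.mono fun x hx => hx.2.1) ?_ ?_
    · refine tendsto_nhdsWithin_iff.mpr ⟨by simpa using hzero.norm, ?_⟩
      filter_upwards [hbad] with x hx using norm_ne_zero_iff.mpr hx.2.2
    · simpa using (hasStrictFDerivAt_exp_zero (𝕂 := ℝ)).hasFDerivAt.hasFDerivWithinAt.lim
        (s := Set.univ) hzero (.of_forall fun _ => Set.mem_univ _) hlY
  have hY_zero : Y = 0 := Submodule.disjoint_def.mp hV Y hYV hYH
  simp [hY_zero] at hY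

/-- Cartan's theorem on closed subgroups. -/
theorem eventually_exists_eq_expUnit (hH : IsClosed (H : Set Aˣ)) :
    ∀ᶠ u in 𝓝 (1 : Aˣ), u ∈ H → ∃ X ∈ lieAlgebra H hH, u = expUnit X := by
  obtain ⟨V, hV⟩ := (lieAlgebra H hH).exists_isCompl
  let P : A →L[ℝ] A := LinearMap.toContinuousLinearMap (Submodule.projection _ _ hV)
  have hPmem (x : A) : P x ∈ lieAlgebra H hH := Submodule.projection_apply_mem hV x
  have hcompl (x : A) : x - P x ∈ V := by
    rw [show x - P x = V.projection _ hV.symm x from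
      sub_eq_of_eq_add' (Submodule.projection_add_projection_eq_self hV x).symm]
    exact Submodule.projection_apply_mem hV.symm x
  have hP_tendsto : Tendsto (fun x => x - P x) (𝓝 0) (𝓝 0) :=
    Continuous.tendsto' (by fun_prop) 0 0 (by simp)
  suffices h : ∀ᶠ a in 𝓝 (1 : A), ∀ u : Aˣ, (u : A) = a → u ∈ H →
      ∃ X ∈ lieAlgebra H hH, u = expUnit X from
    (Units.continuous_val.tendsto 1).eventually h |>.mono fun u hu => hu u rfl
  rw [← map_exp_mul_exp_nhds_zero P, eventually_map]
  filter_upwards [hP_tendsto.eventually (eventually_eq_zero_of_expUnit_mem hV.symm.disjoint)]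
    with x hx u hu huH
  have hu_eq : u = expUnit (x - P x) * expUnit (P x) := Units.ext hu
  have hmem : expUnit (x - P x) ∈ H := by
    rw [eq_mul_inv_of_mul_eq hu_eq.symm]
    exact mul_mem huH (inv_mem (expUnit_mem_of_mem_lieAlgebra (hPmem x)))
  refine ⟨P x, hPmem x, ?_⟩
  rw [hu_eq, hx (hcompl x) hmem, expUnit_zero, one_mul]

end Cartan

lemma isClosed_normalizer {G : Type*} [Group G] [TopologicalSpace G] [IsTopologicalGroup G]
    {H : Subgroup G} (hH : IsClosed (H : Set G)) :
    IsClosed (Subgroup.normalizer (H : Set G) : Set G) := by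
  have heq : (Subgroup.normalizer (H : Set G) : Set G) =
      ⋂ h ∈ H, {g | g * h * g⁻¹ ∈ H} ∩ {g | g⁻¹ * h * g ∈ H} := by
    ext g
    simp only [SetLike.mem_coe, Set.mem_iInter, Set.mem_inter_iff, Set.mem_ofPred_eq]
    refine ⟨fun hg h hh => ⟨(Subgroup.mem_normalizer_iff.mp hg h).mp hh,
      (Subgroup.mem_normalizer_iff''.mp hg h).mp hh⟩,
      fun hg => Subgroup.mem_normalizer_iff.mpr fun h => ⟨fun hh => (hg h hh).1, fun hh => ?_⟩⟩
    simpa [mul_assoc] using (hg _ hh).2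
  rw [heq]
  exact isClosed_biInter fun h _ => (hH.preimage (by fun_prop)).inter (hH.preimage (by fun_prop))

section Average

open MeasureTheory

variable {A : Type*} [NormedRing A] {K : Type*} [Group K] [TopologicalSpace K]
  [MeasurableSpace K] (μ : Measure K) {σ ρ : K →* Aˣ}

lemma integrable_intertwiner [BorelSpace K] [CompactSpace K] [IsFiniteMeasure μ]
    (hσ : Continuous σ) (hρ : Continuous ρ) (X : A) :
    Integrable (fun k => (σ k : A) * X * ↑(ρ k)⁻¹) μ :=
  Continuous.integrable_of_hasCompactSupport (by fun_prop) (.of_compactSpace _)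

variable [NormedAlgebra ℝ A]

/-- The average over `μ` of the operators `σ k * X * (ρ k)⁻¹`. For an invariant `μ` it intertwines
the representations `ρ` and `σ`. -/
def intertwinerAverage (σ ρ : K →* Aˣ) (X : A) : A :=
  ∫ k, σ k * X * ↑(ρ k)⁻¹ ∂μ

variable [BorelSpace K] [CompactSpace K]

lemma mul_intertwinerAverage [IsFiniteMeasure μ] [ContinuousMul K] [μ.IsMulLeftInvariant]
    (hσ : Continuous σ) (hρ : Continuous ρ) (h : K) (X : A) :
    (σ h : A) * intertwinerAverage μ σ ρ X = intertwinerAverage μ σ ρ X * ρ h := by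
  have hint := integrable_intertwiner μ hσ hρ X
  rw [← Units.mul_inv_eq_iff_eq_mul, intertwinerAverage, ← integral_const_mul_of_integrable hint,
    ← integral_mul_const_of_integrable (hint.const_mul _)]
  refine .trans ?_ (integral_mul_left_eq_self (fun k => (σ k : A) * X * ↑(ρ k)⁻¹) h)
  simp only [map_mul, mul_inv_rev, Units.val_mul, mul_assoc]

lemma intertwinerAverage_sub_self [CompleteSpace A] [IsProbabilityMeasure μ]
    (hσ : Continuous σ) (hρ : Continuous ρ) (X : A) :
    intertwinerAverage μ σ ρ X - X = ∫ k, ((σ k : A) * X * ↑(ρ k)⁻¹ - X) ∂μ := by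
  rw [integral_sub (integrable_intertwiner μ hσ hρ X) (integrable_const X), integral_const,
    probReal_univ, one_smul, intertwinerAverage]

lemma exists_isMulLeftInvariant_isProbabilityMeasure (K : Type*) [Group K] [TopologicalSpace K]
    [IsTopologicalGroup K] [CompactSpace K] [MeasurableSpace K] [BorelSpace K] :
    ∃ μ : Measure K, μ.IsMulLeftInvariant ∧ IsProbabilityMeasure μ :=
  ⟨Measure.haarMeasure ⊤, inferInstance, ⟨Measure.haarMeasure_self⟩⟩

end Average

section Normalizer

open MeasureTheory Filter Topology

variable {A : Type*} [NormedRing A] [NormedAlgebra ℝ A] [CompleteSpace A] {H : Subgroup Aˣ}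

lemma conj_sub_self_mem_lieAlgebra (hH : IsClosed (H : Set Aˣ)) {X : A}
    (hX : X ∈ lieAlgebra (Subgroup.normalizer (H : Set Aˣ)) (isClosed_normalizer hH))
    {u : Aˣ} (hu : u ∈ H) : u * X * ↑u⁻¹ - X ∈ lieAlgebra H hH := by
  refine expUnit_smul_mem_of_hasDerivAt hH
    (γ := fun t => expUnit (t • (u * X * ↑u⁻¹)) * expUnit (t • -X)) (fun t => ?_)
    (by simp only [zero_smul, expUnit_zero, mul_one]) ?_
  · have hconj := (Subgroup.mem_normalizer_iff.mp (hX t) u⁻¹).mp (inv_mem hu)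
    rw [← smul_mul_assoc, ← mul_smul_comm, expUnit_conj, smul_neg, expUnit_neg]
    simpa only [mul_assoc] using mul_mem hu hconj
  · simpa [expUnit_zero, sub_eq_add_neg] using
      (hasDerivAt_expUnit_smul (u * X * ↑u⁻¹)).fun_mul (hasDerivAt_expUnit_smul (-X))

lemma commute_of_mem_lieAlgebra {hH : IsClosed (H : Set Aˣ)} {T Y : A}
    (hT : ∀ u ∈ H, Commute T (u : A)) (hY : Y ∈ lieAlgebra H hH) : Commute T Y := by
  have hleft := (hasDerivAt_expUnit_smul Y).const_mul T
  have hright := (hasDerivAt_expUnit_smul Y).mul_const T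
  rw [← funext fun t => (hT _ (hY t)).eq] at hright
  exact hleft.unique hright

lemma expUnit_mem_centralizer {E : A} (hE : ∀ u ∈ H, Commute (u : A) E) :
    expUnit E ∈ Subgroup.centralizer (H : Set Aˣ) := by
  refine Subgroup.mem_centralizer_iff.mpr fun u hu => ?_
  rw [← mul_inv_eq_iff_eq_mul, ← expUnit_conj, (hE u hu).eq, Units.mul_inv_cancel_right]

lemma expUnit_mem_sup_centralizer (hH : IsCompact (H : Set Aˣ)) {X : A}
    (hX : X ∈ lieAlgebra (Subgroup.normalizer (H : Set Aˣ)) (isClosed_normalizer hH.isClosed)) :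
    expUnit X ∈ H ⊔ Subgroup.centralizer (H : Set Aˣ) := by
  have : CompactSpace H := isCompact_iff_compactSpace.mp hH
  borelize ↥H
  obtain ⟨μ, _, _⟩ := exists_isMulLeftInvariant_isProbabilityMeasure H
  have hval : Continuous H.subtype := continuous_subtype_val
  let E := intertwinerAverage μ H.subtype H.subtype X
  have hE : ∀ u ∈ H, Commute (u : A) E := fun u hu =>
    mul_intertwinerAverage μ hval hval ⟨u, hu⟩ X
  have hEX : E - X ∈ lieAlgebra H hH.isClosed := by
    rw [intertwinerAverage_sub_self μ hval hval X]
    refine (lieAlgebra H hH.isClosed).convex.integral_mem (isClosed_lieAlgebra H _)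
      (.of_forall fun u => conj_sub_self_mem_lieAlgebra hH.isClosed hX u.2) ?_
    exact (integrable_intertwiner μ hval hval X).sub (integrable_const X)
  have hXE : X - E ∈ lieAlgebra H hH.isClosed := by simpa only [neg_sub] using neg_mem hEX
  have hcomm : Commute (X - E) E :=
    (commute_of_mem_lieAlgebra (fun u hu => (hE u hu).symm) hXE).symm
  rw [← sub_add_cancel X E, expUnit_add_of_commute hcomm]
  exact Subgroup.mul_mem_sup (expUnit_mem_of_mem_lieAlgebra hXE) (expUnit_mem_centralizer hE)

theorem eventually_normalizer_subset_sup_centralizer [FiniteDimensional ℝ A]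
    (hH : IsCompact (H : Set Aˣ)) :
    ∀ᶠ u in 𝓝 (1 : Aˣ), u ∈ Subgroup.normalizer (H : Set Aˣ) →
      u ∈ H ⊔ Subgroup.centralizer (H : Set Aˣ) := by
  filter_upwards [eventually_exists_eq_expUnit (isClosed_normalizer hH.isClosed)] with u hu hmem
  obtain ⟨X, hX, rfl⟩ := hu hmem
  exact expUnit_mem_sup_centralizer hH hX

end Normalizer

section CentralizerModKer

variable {L : Type*} [Group L] {N : Subgroup L} [N.Normal]

/-- The elements of `L` that centralize the normal subgroup `N` modulo the kernel of `ρ`. -/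
def centralizerModKer {M : Type*} [MulOneClass M] (ρ : N →* M) : Subgroup L where
  carrier := {l | ∀ n, ρ (MulAut.conjNormal l n) = ρ n}
  one_mem' n := by rw [map_one, MulAut.one_apply]
  mul_mem' {a b} ha hb n := by rw [map_mul, MulAut.mul_apply, ha, hb]
  inv_mem' {a} ha n := by rw [← ha, ← MulAut.mul_apply, ← map_mul, mul_inv_cancel, map_one,
    MulAut.one_apply]

lemma mem_sup_centralizerModKer {G : Type*} [Group G] {ρ : N →* G} {l : L} {u : G}
    (hu : u ∈ ρ.range ⊔ Subgroup.centralizer (ρ.range : Set G))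
    (hul : ∀ n, u * ρ n * u⁻¹ = ρ (MulAut.conjNormal l n)) : l ∈ N ⊔ centralizerModKer ρ := by
  rw [← SetLike.mem_coe, Subgroup.coe_mul_of_right_le_normalizer_left _ _
    (Subgroup.centralizer_le_normalizer _)] at hu
  obtain ⟨_, ⟨m, rfl⟩, c, hc, rfl⟩ := hu
  have hmem : (m : L)⁻¹ * l ∈ centralizerModKer ρ := fun n => by
    have hcn : ρ n * c = c * ρ n := Subgroup.mem_centralizer_iff.mp hc _ ⟨n, rfl⟩
    have hconj : MulAut.conjNormal ((m : L)⁻¹ * l) n = m⁻¹ * MulAut.conjNormal l n * m :=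
      Subtype.ext (by simp [mul_assoc])
    rw [hconj, map_mul, map_mul, ← hul, map_inv]
    simp [mul_assoc, ← hcn]
  simpa using Subgroup.mul_mem_sup m.2 hmem

lemma mem_normalizer_range {G : Type*} [Group G] {ρ : N →* G} {l : L} {u : G}
    (hul : ∀ n, u * ρ n * u⁻¹ = ρ (MulAut.conjNormal l n)) :
    u ∈ Subgroup.normalizer (ρ.range : Set G) := by
  refine Subgroup.mem_normalizer_iff.mpr fun g => ⟨?_, ?_⟩
  · rintro ⟨n, rfl⟩
    exact ⟨_, (hul n).symm⟩
  · rintro ⟨n, hn⟩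
    refine ⟨(MulAut.conjNormal l).symm n, ?_⟩
    have := hul ((MulAut.conjNormal l).symm n)
    rw [MulEquiv.apply_symm_apply, hn] at this
    exact mul_left_cancel (mul_right_cancel this)

end CentralizerModKer

section ConnectedQuotient

open MeasureTheory Filter Topology

variable {L : Type*} [Group L] [TopologicalSpace L] [IsTopologicalGroup L]
  {N : Subgroup L} [N.Normal]

lemma continuous_conjNormal : Continuous fun p : L × N => MulAut.conjNormal p.1 p.2 := by
  refine Continuous.subtype_mk (f := fun p : L × N => p.1 * p.2 * p.1⁻¹) ?_ _
  fun_prop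

lemma eq_top_of_mem_nhds_one [ConnectedSpace (L ⧸ N)] {H : Subgroup L} (hNH : N ≤ H)
    (hH : (H : Set L) ∈ 𝓝 1) : H = ⊤ := by
  let π := QuotientGroup.mk' N
  have hopen : IsOpen (H.map π : Set (L ⧸ N)) :=
    QuotientGroup.isOpenMap_coe _ (H.isOpen_of_mem_nhds hH)
  have htop : H.map π = ⊤ := SetLike.coe_injective <|
    IsClopen.eq_univ ⟨(H.map π).isClosed_of_isOpen hopen, hopen⟩ ⟨1, one_mem _⟩
  have hker : π.ker ≤ H := (QuotientGroup.ker_mk' N).trans_le hNH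
  rw [← Subgroup.comap_map_eq_self hker, htop, Subgroup.comap_top]

variable [CompactSpace N] {A : Type*} [NormedRing A] [NormedAlgebra ℝ A] [CompleteSpace A]
  {ρ : N →* Aˣ}

lemma tendsto_intertwinerAverage_conjNormal [MeasurableSpace N] [BorelSpace N] (μ : Measure N)
    [IsProbabilityMeasure μ] (hρ : Continuous ρ) :
    Tendsto (fun l : L =>
      intertwinerAverage μ (ρ.comp (MulAut.conjNormal l).toMonoidHom) ρ (1 : A)) (𝓝 1) (𝓝 1) := by
  have hcont : Continuous fun p : L × N => ρ (MulAut.conjNormal p.1 p.2) :=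
    hρ.comp continuous_conjNormal
  refine Metric.tendsto_nhds.mpr fun ε hε => ?_
  have hnear : ∀ᶠ l in 𝓝 (1 : L), ∀ n ∈ (Set.univ : Set N),
      dist (ρ (MulAut.conjNormal l n) * 1 * ↑(ρ n)⁻¹ : A) 1 < ε / 2 := by
    refine isCompact_univ.eventually_forall_of_forall_eventually fun n _ => ?_
    have hlim : Tendsto (fun p : L × N => (ρ (MulAut.conjNormal p.1 p.2) * 1 * ↑(ρ p.2)⁻¹ : A))
        (𝓝 (1, n)) (𝓝 1) :=
      Continuous.tendsto' (((Units.continuous_val.comp hcont).mul continuous_const).mul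
        (by fun_prop)) _ _ (by simp)
    exact hlim.eventually (Metric.ball_mem_nhds 1 (half_pos hε))
  filter_upwards [hnear] with l hl
  have hσ : Continuous (ρ.comp (MulAut.conjNormal l).toMonoidHom) :=
    hcont.comp (Continuous.prodMk_right l)
  rw [dist_eq_norm, intertwinerAverage_sub_self μ hσ hρ]
  calc _ ≤ ε / 2 * μ.real Set.univ := norm_integral_le_of_norm_le_const <| .of_forall fun n => by
        simpa [dist_eq_norm] using (hl n trivial).le
    _ < ε := by rw [probReal_univ, mul_one]; exact half_lt_self hε

lemma eventually_mem_sup_centralizerModKer [FiniteDimensional ℝ A] (hρ : Continuous ρ) :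
    ∀ᶠ l in 𝓝 (1 : L), l ∈ N ⊔ centralizerModKer ρ := by
  borelize ↥N
  obtain ⟨μ, _, _⟩ := exists_isMulLeftInvariant_isProbabilityMeasure N
  have hrange : IsCompact (ρ.range : Set Aˣ) := by
    rw [MonoidHom.coe_range]
    exact isCompact_range hρ
  have hunit : ∀ᶠ a in 𝓝 (1 : A), ∃ u : Aˣ, (u ∈ Subgroup.normalizer (ρ.range : Set Aˣ) →
      u ∈ ρ.range ⊔ Subgroup.centralizer (ρ.range : Set Aˣ)) ∧ (u : A) = a :=
    Units.isOpenEmbedding_val.isOpenMap.image_mem_nhds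
      (eventually_normalizer_subset_sup_centralizer hrange)
  filter_upwards [(tendsto_intertwinerAverage_conjNormal μ hρ).eventually hunit] with l hl
  obtain ⟨u, hu, hu_eq⟩ := hl
  have hσ : Continuous (ρ.comp (MulAut.conjNormal l).toMonoidHom) :=
    hρ.comp (continuous_conjNormal.comp (Continuous.prodMk_right l))
  have hul (n : N) : u * ρ n * u⁻¹ = ρ (MulAut.conjNormal l n) := by
    rw [mul_inv_eq_iff_eq_mul]
    refine Units.ext ?_
    rw [Units.val_mul, Units.val_mul, hu_eq]
    exact (mul_intertwinerAverage μ hσ hρ n 1).symm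
  exact mem_sup_centralizerModKer (hu (mem_normalizer_range hul)) hul

theorem sup_centralizerModKer_eq_top [FiniteDimensional ℝ A] [ConnectedSpace (L ⧸ N)]
    (hρ : Continuous ρ) : N ⊔ centralizerModKer ρ = ⊤ :=
  eq_top_of_mem_nhds_one le_sup_left (eventually_mem_sup_centralizerModKer hρ)

end ConnectedQuotient

section VonNeumannKernel

/-- A continuous finite-dimensional unitary representation of `K`, in matrix form. -/
structure UnitaryMatrixRep (K : Type*) [Group K] [TopologicalSpace K] where
  dim : ℕ
  hom : K →* unitary (Matrix (Fin dim) (Fin dim) ℂ)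
  continuous_hom : Continuous hom

/-- The von Neumann kernel of `K`: the elements acting trivially in all continuous
finite-dimensional unitary representations. -/
def vonNeumannKernel (K : Type*) [Group K] [TopologicalSpace K] : Subgroup K :=
  ⨅ r : UnitaryMatrixRep K, r.hom.ker

lemma mem_vonNeumannKernel {K : Type*} [Group K] [TopologicalSpace K] {k : K} :
    k ∈ vonNeumannKernel K ↔ ∀ r : UnitaryMatrixRep K, r.hom k = 1 :=
  Subgroup.mem_iInf

end VonNeumannKernel

section UnitaryRepresentation

open InnerProductSpace

variable {K : Type*} [Group K] {H : Type*} [NormedAddCommGroup H] [InnerProductSpace ℂ H]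
  (U : K →* (H ≃ₗᵢ[ℂ] H))

/-- The matrix form, in an orthonormal basis, of the restriction of a unitary representation to a
finite-dimensional invariant subspace. -/
def restrictToMatrix (V : Submodule ℂ H) [FiniteDimensional ℂ V] (hV : ∀ g, ∀ v ∈ V, U g v ∈ V) :
    K →* Matrix.unitaryGroup (Fin (Module.finrank ℂ V)) ℂ where
  toFun g := ⟨LinearMap.toMatrixOrthonormal (stdOrthonormalBasis ℂ V)
    ((U g).toLinearEquiv.toLinearMap.restrict (hV g)), by
      rw [Matrix.mem_unitaryGroup_iff', ← map_star, ← map_mul, EmbeddingLike.map_eq_one_iff]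
      refine LinearMap.ext fun v => ext_inner_right ℂ fun w => ?_
      rw [LinearMap.star_eq_adjoint, Module.End.mul_apply, LinearMap.adjoint_inner_left]
      exact (U g).inner_map_map v w⟩
  map_one' := Subtype.ext <| (congrArg _ <| LinearMap.ext fun v => Subtype.ext <|
    congrArg (· (v : H)) (map_one U)).trans (map_one _)
  map_mul' g h := Subtype.ext <| (congrArg _ <| LinearMap.ext fun v => Subtype.ext <|
    congrArg (· (v : H)) (map_mul U g h)).trans (map_mul _ _ _)

variable {U}

lemma apply_eq_self_of_restrictToMatrix_eq_one {V : Submodule ℂ H} [FiniteDimensional ℂ V]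
    {hV : ∀ g, ∀ v ∈ V, U g v ∈ V} {k : K} (hk : restrictToMatrix U V hV k = 1)
    {v : H} (hv : v ∈ V) : U k v = v := by
  have hrestrict : (U k).toLinearEquiv.toLinearMap.restrict (hV k) = 1 :=
    EmbeddingLike.map_eq_one_iff.mp (congrArg Subtype.val hk)
  exact congrArg Subtype.val (LinearMap.congr_fun hrestrict ⟨v, hv⟩)

variable [TopologicalSpace K]

lemma continuous_restrictToMatrix (hU : ∀ v, Continuous fun g => U g v)
    (V : Submodule ℂ H) [FiniteDimensional ℂ V] (hV : ∀ g, ∀ v ∈ V, U g v ∈ V) :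
    Continuous (restrictToMatrix U V hV) := by
  refine Continuous.subtype_mk (continuous_matrix fun i j => ?_) _
  simp only [LinearMap.toMatrixOrthonormal_apply_apply]
  exact continuous_const.inner ((hU _).subtype_mk _)

lemma apply_eq_self_of_mem_vonNeumannKernel (hU : ∀ v, Continuous fun g => U g v)
    {V : Submodule ℂ H} [FiniteDimensional ℂ V] (hV : ∀ g, ∀ v ∈ V, U g v ∈ V)
    {k : K} (hk : k ∈ vonNeumannKernel K) {v : H} (hv : v ∈ V) : U k v = v :=
  apply_eq_self_of_restrictToMatrix_eq_one
    (mem_vonNeumannKernel.mp hk ⟨_, _, continuous_restrictToMatrix hU V hV⟩) hv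

variable [CompleteSpace H]

lemma apply_eq_apply_of_isCompactOperator_of_isSymmetric (hU : ∀ v, Continuous fun g => U g v)
    {R : H →L[ℂ] H} (hR : IsCompactOperator R) (hsymm : R.toLinearMap.IsSymmetric)
    (hRU : ∀ g v, R (U g v) = U g (R v)) {k : K} (hk : k ∈ vonNeumannKernel K) (v : H) :
    R (U k v) = R v := by
  let D : H →L[ℂ] H := R ∘L ((U k : H →L[ℂ] H) - .id ℂ H)
  have hD (w : H) : D w = R (U k w) - R w := by simp [D]
  have heigen (c : ℂ) : Module.End.eigenspace R.toLinearMap c ≤ D.ker := fun w hw => by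
    have hRw : R w = c • w := Module.End.mem_eigenspace_iff.mp hw
    suffices c • U k w = c • w from
      (hD w).trans (by rw [hRU, hRw, map_smul, this, sub_self])
    rcases eq_or_ne c 0 with rfl | hc
    · rw [zero_smul, zero_smul]
    have : FiniteDimensional ℂ (Module.End.eigenspace R.toLinearMap c) :=
      R.finite_dimensional_eigenspace hR c hc
    rw [apply_eq_self_of_mem_vonNeumannKernel hU (fun g x hx => ?_) hk hw]
    have hRx : R x = c • x := Module.End.mem_eigenspace_iff.mp hx
    exact Module.End.mem_eigenspace_iff.mpr <| (hRU g x).trans (by rw [hRx, map_smul])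
  have hdense : (⨆ c, Module.End.eigenspace R.toLinearMap c).topologicalClosure = ⊤ :=
    (Submodule.topologicalClosure_eq_top_iff).mpr
      (R.orthogonalComplement_iSup_eigenspaces_eq_bot hR hsymm)
  have hker : ⊤ ≤ D.ker :=
    hdense ▸ Submodule.topologicalClosure_minimal _ (iSup_le heigen) D.isClosed_ker
  exact sub_eq_zero.mp ((hD v).symm.trans (hker (Submodule.mem_top (x := v))))

lemma apply_eq_apply_of_isCompactOperator {H' : Type*} [NormedAddCommGroup H']
    [InnerProductSpace ℂ H'] [CompleteSpace H'] {U' : K →* (H' ≃ₗᵢ[ℂ] H')}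
    (hU : ∀ v, Continuous fun g => U g v) {B : H →L[ℂ] H'} (hB : IsCompactOperator B)
    (hBU : ∀ g v, B (U g v) = U' g (B v)) {k : K} (hk : k ∈ vonNeumannKernel K) (v : H) :
    B (U k v) = B v := by
  let R : H →L[ℂ] H := B.adjoint ∘L B
  have hinner (v w : H) : ⟪R v, w⟫_ℂ = ⟪B v, B w⟫_ℂ := B.adjoint_inner_left w (B v)
  have hRU (g : K) (v : H) : R (U g v) = U g (R v) := ext_inner_right ℂ fun w => by
    obtain ⟨w, rfl⟩ := (U g).surjective w
    simp only [hinner, hBU, LinearIsometryEquiv.inner_map_map]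
  have hR : R (U k v) = R v := apply_eq_apply_of_isCompactOperator_of_isSymmetric hU
    (hB.clm_comp B.adjoint) B.isPositive_adjoint_comp_self.isSymmetric hRU hk v
  rw [← sub_eq_zero, ← map_sub, ← inner_self_eq_zero (𝕜 := ℂ), ← hinner, map_sub, hR, sub_self,
    inner_zero_left]

end UnitaryRepresentation

section LeftRegular

open MeasureTheory BoundedContinuousFunction

variable {K : Type*} [Group K] [TopologicalSpace K] [IsTopologicalGroup K] [MeasurableSpace K]
  [BorelSpace K] (μ : Measure K) [μ.IsMulLeftInvariant]

/-- The left regular representation of `K` on `L²`. -/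
def leftRegular : K →* (Lp ℂ 2 μ ≃ₗᵢ[ℂ] Lp ℂ 2 μ) where
  toFun g :=
    { DistribMulAction.toLinearEquiv ℂ (Lp ℂ 2 μ) (DomMulAct.mk g⁻¹) with
      norm_map' := fun f => DomMulAct.norm_smul_Lp _ f }
  map_one' := by
    ext1 f
    exact (congrArg (fun x => DomMulAct.mk x • f) inv_one).trans (one_smul Kᵈᵐᵃ f)
  map_mul' g h := by
    ext1 f
    exact (congrArg (fun x => DomMulAct.mk x • f) (mul_inv_rev g h)).trans (mul_smul _ _ f)

lemma continuous_leftRegular [LocallyCompactSpace K] [IsFiniteMeasureOnCompacts μ]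
    [μ.InnerRegularCompactLTTop] (f : Lp ℂ 2 μ) : Continuous fun g => leftRegular μ g f := by
  have : Fact ((2 : ENNReal) ≠ ⊤) := ⟨ENNReal.ofNat_ne_top⟩
  exact (DomMulAct.continuous_mk.comp continuous_inv).smul continuous_const

lemma toLp_eq_leftRegular [IsFiniteMeasure μ] {g : K} {f f' : K →ᵇ ℂ}
    (hf : ∀ x, f' x = f (g⁻¹ * x)) :
    toLp 2 μ ℂ f' = leftRegular μ g (toLp 2 μ ℂ f) := by
  refine Lp.ext ?_
  calc ⇑(toLp 2 μ ℂ f') =ᵐ[μ] f' := coeFn_toLp 2 μ ℂ f'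
    _ =ᵐ[μ] f ∘ (g⁻¹ • ·) := .of_eq (funext hf)
    _ =ᵐ[μ] toLp 2 μ ℂ f ∘ (g⁻¹ • ·) :=
      (measurePreserving_smul g⁻¹ μ).quasiMeasurePreserving.ae_eq_comp (coeFn_toLp 2 μ ℂ f).symm
    _ =ᵐ[μ] leftRegular μ g (toLp 2 μ ℂ f) := (DomMulAct.smul_Lp_ae_eq _ _).symm

end LeftRegular

section PeterWeyl

open InnerProductSpace BoundedContinuousFunction MeasureTheory

variable {K : Type*} [Group K] [TopologicalSpace K] [CompactSpace K]

section MatrixCoefficient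

variable {H : Type*} [NormedAddCommGroup H] [InnerProductSpace ℂ H]
  {U : K →* (H ≃ₗᵢ[ℂ] H)} (hU : ∀ v, Continuous fun g => U g v) (w : H)

/-- The operator sending `v` to the matrix coefficient `x ↦ ⟪U x w, v⟫` of a unitary
representation `U`. -/
def matrixCoeff : H →L[ℂ] (K →ᵇ ℂ) :=
  LinearMap.mkContinuous
    { toFun v := mkOfCompact ⟨fun x => ⟪U x w, v⟫_ℂ, (hU w).inner continuous_const⟩
      map_add' _ _ := ext fun _ => inner_add_right _ _ _
      map_smul' _ _ := ext fun _ => inner_smul_right _ _ _ }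
    ‖w‖ fun v => (norm_le (by positivity)).mpr fun x =>
      (norm_inner_le_norm (U x w) v).trans_eq (by rw [LinearIsometryEquiv.norm_map])

lemma matrixCoeff_apply (v : H) (x : K) : matrixCoeff hU w v x = ⟪U x w, v⟫_ℂ :=
  rfl

lemma matrixCoeff_map_apply (g : K) (v : H) (x : K) :
    matrixCoeff hU w (U g v) x = matrixCoeff hU w v (g⁻¹ * x) := by
  rw [matrixCoeff_apply, matrixCoeff_apply, map_mul, map_inv, LinearIsometryEquiv.coe_mul,
    Function.comp_apply, ← (U g).symm.inner_map_map, LinearIsometryEquiv.symm_apply_apply,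
    LinearIsometryEquiv.coe_inv]

lemma isCompactOperator_matrixCoeff : IsCompactOperator (matrixCoeff hU w) := by
  refine isCompactOperator_iff_exists_mem_nhds_isCompact_closure_image _ |>.mpr
    ⟨Metric.closedBall 0 1, Metric.closedBall_mem_nhds _ one_pos, ?_⟩
  refine arzela_ascoli (Metric.closedBall 0 ‖w‖) (isCompact_closedBall _ _) _ ?_ fun x₀ => ?_
  · rintro _ x ⟨v, hv, rfl⟩
    rw [mem_closedBall_zero_iff] at hv ⊢
    calc ‖⟪U x w, v⟫_ℂ‖ ≤ ‖U x w‖ * ‖v‖ := norm_inner_le_norm _ _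
      _ ≤ ‖w‖ * 1 := by rw [LinearIsometryEquiv.norm_map]; gcongr
      _ = ‖w‖ := mul_one _
  · refine Metric.equicontinuousAt_iff_right.mpr fun ε hε => ?_
    filter_upwards [Metric.tendsto_nhds.mp ((hU w).tendsto x₀) ε hε] with x hx
    rintro ⟨_, v, hv, rfl⟩
    rw [mem_closedBall_zero_iff] at hv
    calc dist (matrixCoeff hU w v x₀) (matrixCoeff hU w v x)
        = ‖⟪U x₀ w - U x w, v⟫_ℂ‖ := by
          rw [matrixCoeff_apply, matrixCoeff_apply, dist_eq_norm, inner_sub_left]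
      _ ≤ ‖U x₀ w - U x w‖ * ‖v‖ := norm_inner_le_norm _ _
      _ ≤ ‖U x₀ w - U x w‖ * 1 := by gcongr
      _ < ε := by rwa [mul_one, ← dist_eq_norm, dist_comm]

end MatrixCoefficient

variable [IsTopologicalGroup K]

lemma leftRegular_eq_self_of_mem_vonNeumannKernel [MeasurableSpace K] [BorelSpace K]
    (μ : Measure K) [IsFiniteMeasure μ] [μ.InnerRegularCompactLTTop] [μ.IsMulLeftInvariant]
    [μ.IsOpenPosMeasure] {k : K} (hk : k ∈ vonNeumannKernel K) (w : Lp ℂ 2 μ) :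
    leftRegular μ k w = w := by
  let S := matrixCoeff (continuous_leftRegular μ) w
  let B : Lp ℂ 2 μ →L[ℂ] Lp ℂ 2 μ := toLp 2 μ ℂ ∘L S
  have hB : IsCompactOperator B :=
    (isCompactOperator_matrixCoeff (continuous_leftRegular μ) w).clm_comp (toLp 2 μ ℂ)
  have hBk (v : Lp ℂ 2 μ) : B (leftRegular μ k v) = B v :=
    apply_eq_apply_of_isCompactOperator (continuous_leftRegular μ) hB
      (fun g v => toLp_eq_leftRegular μ (matrixCoeff_map_apply _ w g v)) hk v
  have hSk (v : Lp ℂ 2 μ) : S (leftRegular μ k v) = S v := toLp_injective μ (hBk v)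
  refine ext_inner_right ℂ fun v => ?_
  obtain ⟨v, rfl⟩ := (leftRegular μ k).surjective v
  have := congrArg (· 1) (hSk v)
  simpa [S, matrixCoeff_apply] using this.symm

/-- The Peter–Weyl theorem. -/
theorem vonNeumannKernel_eq_bot [T2Space K] : vonNeumannKernel K = ⊥ := by
  borelize K
  refine (Subgroup.eq_bot_iff_forall _).mpr fun k hk => ?_
  by_contra hne
  obtain ⟨f, hf0, hf1, -⟩ := exists_continuous_zero_one_of_isClosed
    (isClosed_singleton (x := (1 : K))) (isClosed_singleton (x := k⁻¹)) (by simpa using hne)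
  let F : K →ᵇ ℂ := mkOfCompact ⟨fun x => (f x : ℂ), by fun_prop⟩
  let F' : K →ᵇ ℂ := mkOfCompact ⟨fun x => (f (k⁻¹ * x) : ℂ), by fun_prop⟩
  let μ : Measure K := Measure.haar
  have hF : F' = F := toLp_injective (p := 2) (𝕜 := ℂ) μ <|
    (toLp_eq_leftRegular μ fun _ => rfl).trans (leftRegular_eq_self_of_mem_vonNeumannKernel μ hk _)
  have : f k⁻¹ = f 1 := by simpa [F, F'] using congrArg (· 1) hF
  simp [hf0 rfl, hf1 rfl] at this

end PeterWeyl

namespace UnitaryMatrixRep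

variable {K : Type*} [Group K] [TopologicalSpace K]

/-- The product of a finite family of unitary representations. -/
def prodUnits (s : Finset (UnitaryMatrixRep K)) :
    K →* (∀ r : s, Matrix (Fin r.1.dim) (Fin r.1.dim) ℂ)ˣ :=
  (MonoidHom.pi fun r : s => (unitary _).subtype.comp r.1.hom).toHomUnits

lemma continuous_prodUnits [ContinuousInv K] (s : Finset (UnitaryMatrixRep K)) :
    Continuous (prodUnits s) := by
  have hval : Continuous fun n : K => fun r : s => (r.1.hom n).1 :=
    continuous_pi fun r => continuous_subtype_val.comp r.1.continuous_hom
  exact Units.continuous_iff.mpr ⟨hval, hval.comp continuous_inv⟩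

lemma hom_eq_of_prodUnits_eq {s : Finset (UnitaryMatrixRep K)} {m n : K}
    (h : prodUnits s m = prodUnits s n) {r : UnitaryMatrixRep K} (hr : r ∈ s) :
    r.hom m = r.hom n :=
  Subtype.ext <| congrFun (congrArg Units.val h) ⟨r, hr⟩

end UnitaryMatrixRep

section CompactNormalSubgroup

open UnitaryMatrixRep

variable {L : Type*} [Group L] [TopologicalSpace L] [IsTopologicalGroup L] {N : Subgroup L}
  [N.Normal]

lemma isClosed_centralizerModKer {M : Type*} [MulOneClass M] [TopologicalSpace M] [T2Space M]
    {ρ : N →* M} (hρ : Continuous ρ) : IsClosed (centralizerModKer ρ : Set L) := by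
  have : (centralizerModKer ρ : Set L) = ⋂ n, {l | ρ (MulAut.conjNormal l n) = ρ n} := by
    ext l
    rw [Set.mem_iInter]
    rfl
  rw [this]
  exact isClosed_iInter fun n => isClosed_eq
    (hρ.comp (continuous_conjNormal.comp (Continuous.prodMk_left n))) continuous_const

lemma mem_centralizer_of_forall_mem_centralizerModKer [CompactSpace N] [T2Space N] {l : L}
    (hl : ∀ r : UnitaryMatrixRep N, l ∈ centralizerModKer r.hom) :
    l ∈ Subgroup.centralizer (N : Set L) := by
  refine Subgroup.mem_centralizer_iff.mpr fun n hn => ?_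
  have hmem : MulAut.conjNormal l ⟨n, hn⟩ * ⟨n, hn⟩⁻¹ ∈ vonNeumannKernel N :=
    mem_vonNeumannKernel.mpr fun r => by rw [map_mul, hl r, ← map_mul, mul_inv_cancel, map_one]
  rw [vonNeumannKernel_eq_bot, Subgroup.mem_bot, mul_inv_eq_one] at hmem
  exact (mul_inv_eq_iff_eq_mul.mp (congrArg Subtype.val hmem)).symm

open scoped Matrix.Norms.L2Operator in
lemma exists_forall_inv_mul_mem_centralizerModKer [CompactSpace N] [ConnectedSpace (L ⧸ N)]
    (s : Finset (UnitaryMatrixRep N)) (l : L) :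
    ∃ n : N, ∀ r ∈ s, (n : L)⁻¹ * l ∈ centralizerModKer r.hom := by
  let (r : s) : NormedAlgebra ℝ (Matrix (Fin r.1.dim) (Fin r.1.dim) ℂ) :=
    NormedAlgebra.complexToReal
  have htop : N ⊔ centralizerModKer (prodUnits s) = ⊤ :=
    sup_centralizerModKer_eq_top (continuous_prodUnits s)
  obtain ⟨n, hn, c, hc, rfl⟩ := Subgroup.mem_sup_of_normal_left.mp (htop.ge (Subgroup.mem_top l))
  refine ⟨⟨n, hn⟩, fun r hr m => ?_⟩
  rw [inv_mul_cancel_left]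
  exact hom_eq_of_prodUnits_eq (hc m) hr

theorem sup_centralizer_eq_top [CompactSpace N] [T2Space N] [ConnectedSpace (L ⧸ N)] :
    N ⊔ Subgroup.centralizer (N : Set L) = ⊤ := by
  refine (Subgroup.eq_top_iff' _).mpr fun l => ?_
  let F (r : UnitaryMatrixRep N) : Set N := {n | (n : L)⁻¹ * l ∈ centralizerModKer r.hom}
  have hF (r : UnitaryMatrixRep N) : IsClosed (F r) :=
    (isClosed_centralizerModKer r.continuous_hom).preimage (by fun_prop)
  obtain ⟨n, hn⟩ : (⋂ r, F r).Nonempty := CompactSpace.iInter_nonempty hF fun s => by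
    obtain ⟨n, hn⟩ := exists_forall_inv_mul_mem_centralizerModKer s l
    exact ⟨n, Set.mem_iInter₂.mpr hn⟩
  rw [← mul_inv_cancel_left (n : L) l]
  exact Subgroup.mul_mem_sup n.2 <|
    mem_centralizer_of_forall_mem_centralizerModKer fun r => Set.mem_iInter.mp hn r

end CompactNormalSubgroup

namespace PosReal

/-- The real power of a positive real number. -/
def rpow (p : PosReal) (t : ℝ) : PosReal :=
  ⟨p.1 ^ t, Real.rpow_pos_of_pos p.2 t⟩

lemma rpow_inv_pow (p : PosReal) {n : ℕ} (hn : n ≠ 0) : rpow p (n : ℝ)⁻¹ ^ n = p :=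
  Subtype.ext <| Real.rpow_inv_natCast_pow p.2.le hn

lemma rpow_ratCast (p : PosReal) (r : ℚ) : rpow p r = rpow p (r.den : ℝ)⁻¹ ^ r.num := by
  refine Subtype.ext ?_
  rw [Positive.coe_zpow]
  change p.1 ^ (r : ℝ) = (p.1 ^ (r.den : ℝ)⁻¹) ^ r.num
  rw [← Real.rpow_intCast, ← Real.rpow_mul p.2.le, Rat.cast_def, div_eq_inv_mul]

lemma denseRange_rpow_ratCast {p : PosReal} (hp : p ≠ 1) :
    DenseRange fun r : ℚ => rpow p r := by
  have hp' : p.1 ≠ 1 := fun h => hp (Subtype.ext h)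
  have hcont : Continuous (rpow p) :=
    (Real.continuous_const_rpow p.2.ne').subtype_mk _
  have hsurj : Function.Surjective (rpow p) := fun q =>
    ⟨Real.logb p.1 q.1, Subtype.ext (Real.rpow_logb p.2 hp' q.2)⟩
  exact hsurj.denseRange.comp Rat.denseRange_cast hcont

instance : ConnectedSpace PosReal :=
  Subtype.connectedSpace isConnected_Ioi

end PosReal

section CentralKernel

variable {G : Type*} [Group G]

lemma isOpenMap_of_isProperMap {P : Type*} [TopologicalSpace G] [IsTopologicalGroup G] [Group P]
    [TopologicalSpace P] {f : G →* P} (hf : IsProperMap f) (hsurj : Function.Surjective f) :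
    IsOpenMap f :=
  (MonoidHom.isOpenQuotientMap_of_isQuotientMap
    (hf.isClosedMap.isQuotientMap hf.continuous hsurj)).isOpenMap

lemma commute_of_apply_eq_of_ker_le_center {P : Type*} [Group P] {ν : G →* P}
    (hν : ν.ker ≤ Subgroup.center G) {x y y' : G} (hy' : Commute x y') (h : ν y = ν y') :
    Commute x y := by
  have hmem : y'⁻¹ * y ∈ Subgroup.center G := hν (by simp [MonoidHom.mem_ker, h])
  rw [← mul_inv_cancel_left y' y]
  exact hy'.mul_right (Subgroup.mem_center_iff.mp hmem x)

theorem commute_of_ker_le_center [TopologicalSpace G] [IsTopologicalGroup G] [T2Space G]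
    {ν : G →* PosReal} (hopen : IsOpenMap ν) (hsurj : Function.Surjective ν)
    (hν : ν.ker ≤ Subgroup.center G) (x y : G) : Commute x y := by
  by_cases hx : ν x = 1
  · exact ((Subgroup.mem_center_iff.mp (hν hx)) y).symm
  have hdense : Dense (ν ⁻¹' Set.range fun r : ℚ => (ν x).rpow r) :=
    (PosReal.denseRange_rpow_ratCast hx).preimage hopen
  have hclosed : IsClosed {y | Commute x y} :=
    isClosed_eq (continuous_const_mul x) (continuous_mul_const x)
  refine hclosed.closure_subset_iff.mpr (fun y hy => ?_) (hdense y)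
  obtain ⟨r, hr⟩ := hy
  obtain ⟨z, hz⟩ := hsurj ((ν x).rpow (r.den : ℝ)⁻¹)
  have hzx : Commute z x := commute_of_apply_eq_of_ker_le_center hν
    ((Commute.refl z).pow_right r.den)
    (by rw [map_pow, hz, PosReal.rpow_inv_pow _ r.den_nz])
  refine commute_of_apply_eq_of_ker_le_center hν (hzx.symm.zpow_right r.num) ?_
  rw [map_zpow, hz, ← PosReal.rpow_ratCast, ← hr]

end CentralKernel

section CentralComplement

variable {L : Type*} [Group L]

lemma surjective_comp_subtype_of_ker_sup_eq_top {P : Type*} [Group P] {ν : L →* P}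
    (hsurj : Function.Surjective ν) {S : Subgroup L} (hS : ν.ker ⊔ S = ⊤) :
    Function.Surjective (ν.comp S.subtype) := fun p => by
  obtain ⟨l, rfl⟩ := hsurj p
  obtain ⟨k, hk, s, hs, rfl⟩ := Subgroup.mem_sup_of_normal_left.mp (hS.ge (Subgroup.mem_top l))
  exact ⟨⟨s, hs⟩, by simp [MonoidHom.mem_ker.mp hk]⟩

lemma centralizer_le_center {N : Subgroup L} (hN : N ⊔ Subgroup.centralizer (N : Set L) = ⊤)
    (hcomm : ∀ x y : Subgroup.centralizer (N : Set L), Commute x y) :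
    Subgroup.centralizer (N : Set L) ≤ Subgroup.center L := by
  intro q hq
  have hle : N ⊔ Subgroup.centralizer (N : Set L) ≤ Subgroup.centralizer {q} :=
    sup_le
      (fun n hn => Subgroup.mem_centralizer_singleton_iff.mpr
        (Subgroup.mem_centralizer_iff.mp hq n hn))
      fun r hr => Subgroup.mem_centralizer_singleton_iff.mpr
        (congrArg Subtype.val (hcomm ⟨r, hr⟩ ⟨q, hq⟩))
  exact Subgroup.mem_center_iff.mpr fun l =>
    Subgroup.mem_centralizer_singleton_iff.mp (hle (hN.ge (Subgroup.mem_top l)))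

theorem ker_sup_center_eq_top [TopologicalSpace L] [IsTopologicalGroup L] [T2Space L]
    {ν : L →* PosReal} (hν : IsProperMap ν) (hsurj : Function.Surjective ν)
    (htop : ν.ker ⊔ Subgroup.centralizer (ν.ker : Set L) = ⊤) :
    ν.ker ⊔ Subgroup.center L = ⊤ := by
  let Q : Subgroup L := Subgroup.centralizer (ν.ker : Set L)
  have hQ : IsClosed (Q : Set L) := Set.isClosed_centralizer _
  have hproper : IsProperMap (ν.comp Q.subtype) :=
    hν.comp hQ.isClosedEmbedding_subtypeVal.isProperMap
  have hQsurj : Function.Surjective (ν.comp Q.subtype) :=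
    surjective_comp_subtype_of_ker_sup_eq_top hsurj htop
  have hcentral : (ν.comp Q.subtype).ker ≤ Subgroup.center Q := fun k hk =>
    Subgroup.mem_center_iff.mpr fun q => Subtype.ext
      (Subgroup.mem_centralizer_iff.mp q.2 k hk).symm
  have hcomm := commute_of_ker_le_center (isOpenMap_of_isProperMap hproper hQsurj) hQsurj hcentral
  exact top_le_iff.mp (htop.ge.trans (sup_le_sup_left (centralizer_le_center htop hcomm) _))

end CentralComplement

section Commutator

open scoped commutatorElement

variable {G : Type*} [Group G]

lemma commutatorElement_mul_left_of_mem_center {z : G} (hz : z ∈ Subgroup.center G) (g h : G) :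
    ⁅g * z, h⁆ = ⁅g, h⁆ := by
  rw [commutatorElement_def, commutatorElement_def, mul_assoc g z h,
    ← Subgroup.mem_center_iff.mp hz h]
  group

lemma commutatorElement_mul_right_of_mem_center {z : G} (hz : z ∈ Subgroup.center G) (g h : G) :
    ⁅g, h * z⁆ = ⁅g, h⁆ := by
  rw [← commutatorElement_inv, commutatorElement_mul_left_of_mem_center hz, commutatorElement_inv]

lemma commutator_le_of_sup_center_eq_top {N : Subgroup G} (hN : N ⊔ Subgroup.center G = ⊤) :
    commutator G ≤ ⁅N, N⁆ := by
  rw [commutator_def, Subgroup.commutator_le]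
  intro a _ b _
  obtain ⟨n, hn, z, hz, rfl⟩ := Subgroup.mem_sup_of_normal_right.mp (hN.ge (Subgroup.mem_top a))
  obtain ⟨m, hm, w, hw, rfl⟩ := Subgroup.mem_sup_of_normal_right.mp (hN.ge (Subgroup.mem_top b))
  rw [commutatorElement_mul_left_of_mem_center hz, commutatorElement_mul_right_of_mem_center hw]
  exact Subgroup.commutator_mem_commutator hn hm

theorem topologicalClosure_commutator_eq_top [TopologicalSpace G] [IsTopologicalGroup G]
    {N : Subgroup G} (hN : N ⊔ Subgroup.center G = ⊤)
    (hclosure : N ≤ (commutator G).topologicalClosure) :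
    (commutator N).topologicalClosure = ⊤ := by
  have hle : commutator G ≤ (commutator N).map N.subtype :=
    N.map_subtype_commutator ▸ commutator_le_of_sup_center_eq_top hN
  have hdense : Dense (commutator N : Set N) := Subtype.dense_iff.mpr fun n hn =>
    closure_mono hle (hclosure hn)
  exact SetLike.coe_injective hdense.closure_eq

end Commutator

section Perfect

/-- The `c`-eigenspace of a central element, as a subrepresentation. -/
def centralEigenspace {k K V : Type*} [CommRing k] [Group K] [AddCommGroup V] [Module k V]
    (ρ : Representation k K V) {z : K} (hz : z ∈ Subgroup.center K) (c : k) :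
    Subrepresentation ρ where
  toSubmodule := Module.End.eigenspace (ρ z) c
  apply_mem_toSubmodule k v hv := by
    rw [Module.End.mem_eigenspace_iff] at hv ⊢
    rw [← Module.End.mul_apply, ← map_mul, ← Subgroup.mem_center_iff.mp hz k, map_mul,
      Module.End.mul_apply, hv, map_smul]

variable {K : Type*} [Group K] [TopologicalSpace K] [IsTopologicalGroup K]

lemma eq_one_of_topologicalClosure_commutator_eq_top {M : Type*} [CommGroup M]
    [TopologicalSpace M] [T1Space M] (hK : (commutator K).topologicalClosure = ⊤) {f : K →* M}
    (hf : Continuous f) (k : K) : f k = 1 := by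
  have hker : IsClosed (f.ker : Set K) := isClosed_singleton.preimage hf
  have hle := Subgroup.topologicalClosure_minimal _ (Abelianization.commutator_subset_ker f) hker
  exact hle (hK.ge (Subgroup.mem_top k))

variable {V : Type*} [NormedAddCommGroup V] [NormedSpace ℂ V] [FiniteDimensional ℂ V]

lemma det_eq_one_of_topologicalClosure_commutator_eq_top
    (hK : (commutator K).topologicalClosure = ⊤) {ρ : Representation ℂ K V}
    (hρ : ∀ v, Continuous fun k => ρ k v) (k : K) : LinearMap.det (ρ k) = 1 := by
  let b := Module.finBasis ℂ V
  have hdet (k : K) : LinearMap.det (ρ k) = (LinearMap.toMatrix b b (ρ k)).det :=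
    (LinearMap.det_toMatrix b (ρ k)).symm
  have hcont : Continuous fun k => LinearMap.det (ρ k) := by
    simp only [hdet]
    refine Continuous.matrix_det (continuous_matrix fun i j => ?_)
    simp only [LinearMap.toMatrix_apply]
    exact (LinearMap.continuous_of_finiteDimensional (b.coord i)).comp (hρ (b j))
  have hunits : Continuous (LinearMap.det.comp ρ).toHomUnits :=
    Units.continuous_iff.mpr ⟨hcont, hcont.comp continuous_inv⟩
  exact congrArg Units.val (eq_one_of_topologicalClosure_commutator_eq_top hK hunits k)

lemma pow_finrank_eigenspace_eq_one (hK : (commutator K).topologicalClosure = ⊤)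
    {ρ : Representation ℂ K V} (hρ : ∀ v, Continuous fun k => ρ k v) {z : K}
    (hz : z ∈ Subgroup.center K) (c : ℂ) :
    c ^ Module.finrank ℂ (Module.End.eigenspace (ρ z) c) = 1 := by
  let σ := (centralEigenspace ρ hz c).toRepresentation
  have hσ : σ z = c • 1 := LinearMap.ext fun w => Subtype.ext <|
    Module.End.mem_eigenspace_iff.mp w.2
  have hdet : LinearMap.det (σ z) = 1 :=
    det_eq_one_of_topologicalClosure_commutator_eq_top
      (V := Module.End.eigenspace (ρ z) c) hK (fun w => (hρ w).subtype_mk _) z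
  rwa [hσ, LinearMap.det_smul, map_one, mul_one] at hdet

lemma pow_factorial_finrank_eq_one_of_hasEigenvalue (hK : (commutator K).topologicalClosure = ⊤)
    {ρ : Representation ℂ K V} (hρ : ∀ v, Continuous fun k => ρ k v) {z : K}
    (hz : z ∈ Subgroup.center K) {c : ℂ} (hc : Module.End.HasEigenvalue (ρ z) c) :
    c ^ (Module.finrank ℂ V).factorial = 1 := by
  have hpos : 0 < Module.finrank ℂ (Module.End.eigenspace (ρ z) c) := by
    rw [Module.finrank_pos_iff, Submodule.nontrivial_iff_ne_bot]
    exact hc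
  obtain ⟨m, hm⟩ := Nat.dvd_factorial hpos (Submodule.finrank_le _)
  rw [hm, pow_mul, pow_finrank_eigenspace_eq_one hK hρ hz, one_pow]

open scoped Matrix.Norms.L2Operator in
lemma unitary_pow_eq_one_of_forall_spectrum {n m : ℕ} {u : unitary (Matrix (Fin n) (Fin n) ℂ)}
    (hu : ∀ c ∈ spectrum ℂ (u : Matrix (Fin n) (Fin n) ℂ), c ^ m = 1) : u ^ m = 1 := by
  have hnormal : IsStarNormal (u : Matrix (Fin n) (Fin n) ℂ) := inferInstance
  refine Subtype.ext ?_
  rw [SubmonoidClass.coe_pow, OneMemClass.coe_one, ← cfc_pow_id (R := ℂ) u.1 m,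
    ← cfc_one (R := ℂ) u.1]
  exact cfc_congr hu

lemma UnitaryMatrixRep.hom_pow_factorial_eq_one (hK : (commutator K).topologicalClosure = ⊤)
    (r : UnitaryMatrixRep K) {z : K} (hz : z ∈ Subgroup.center K) :
    r.hom z ^ r.dim.factorial = 1 := by
  refine unitary_pow_eq_one_of_forall_spectrum fun c hc => ?_
  let ρ : Representation ℂ K (Fin r.dim → ℂ) :=
    (Matrix.toLinAlgEquiv' : Matrix (Fin r.dim) (Fin r.dim) ℂ ≃ₐ[ℂ] _).toMonoidHom.comp
      ((unitary _).subtype.comp r.hom)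
  have hρ (v : Fin r.dim → ℂ) : Continuous fun k => ρ k v :=
    (continuous_subtype_val.comp r.continuous_hom).matrix_mulVec continuous_const
  rw [← Matrix.spectrum_toLin', ← Module.End.hasEigenvalue_iff_mem_spectrum] at hc
  simpa using pow_factorial_finrank_eq_one_of_hasEigenvalue hK hρ hz hc

end Perfect

section CenterTotallySeparated

open Filter Topology

lemma eventually_pow_eq_one_imp_eq_one (A : Type*) [NormedRing A] [NormedAlgebra ℝ A]
    [CompleteSpace A] {m : ℕ} (hm : m ≠ 0) : ∀ᶠ a in 𝓝 (1 : A), a ^ m = 1 → a = 1 := by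
  have hcont : Continuous fun a : A => ∑ i ∈ Finset.range m, a ^ i := by fun_prop
  have hunit : IsUnit (∑ i ∈ Finset.range m, (1 : A) ^ i) := by
    simpa using (IsUnit.mk0 (m : ℝ) (Nat.cast_ne_zero.mpr hm)).map (algebraMap ℝ A)
  filter_upwards [hcont.continuousAt.preimage_mem_nhds (Units.isOpen.mem_nhds hunit)] with a ha hpow
  have hmul : (∑ i ∈ Finset.range m, a ^ i) * (a - 1) = 0 := by rw [geom_sum_mul, hpow, sub_self]
  exact sub_eq_zero.mp (IsUnit.mul_right_eq_zero ha |>.mp hmul)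

lemma isLocallyConstant_of_eventually_eq_one {G M : Type*} [Group G] [TopologicalSpace G]
    [IsTopologicalGroup G] [Group M] {f : G →* M} (hf : ∀ᶠ g in 𝓝 1, f g = 1) :
    IsLocallyConstant f := by
  refine (IsLocallyConstant.iff_eventually_eq _).mpr fun x => ?_
  have hlim : Tendsto (fun y => x⁻¹ * y) (𝓝 x) (𝓝 1) :=
    Continuous.tendsto' (by fun_prop) _ _ (inv_mul_cancel x)
  filter_upwards [hlim.eventually hf] with y hy
  rwa [map_mul, map_inv, inv_mul_eq_one, eq_comm] at hy

variable {K : Type*} [Group K] [TopologicalSpace K] [IsTopologicalGroup K]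

open scoped Matrix.Norms.L2Operator in
lemma UnitaryMatrixRep.isLocallyConstant_restrict_center
    (hK : (commutator K).topologicalClosure = ⊤) (r : UnitaryMatrixRep K) :
    IsLocallyConstant (r.hom.comp (Subgroup.center K).subtype) := by
  refine isLocallyConstant_of_eventually_eq_one ?_
  let : NormedAlgebra ℝ (Matrix (Fin r.dim) (Fin r.dim) ℂ) := NormedAlgebra.complexToReal
  have hlim : Tendsto (fun z : Subgroup.center K => (r.hom z).1) (𝓝 1) (𝓝 1) :=
    Continuous.tendsto' (continuous_subtype_val.comp
      (r.continuous_hom.comp continuous_subtype_val)) _ _ (by simp)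
  filter_upwards [hlim.eventually
    (eventually_pow_eq_one_imp_eq_one _ r.dim.factorial_ne_zero)] with z hz
  exact Subtype.ext (hz (congrArg Subtype.val (r.hom_pow_factorial_eq_one hK z.2)))

theorem totallySeparatedSpace_center [CompactSpace K] [T2Space K]
    (hK : (commutator K).topologicalClosure = ⊤) :
    TotallySeparatedSpace (Subgroup.center K) := by
  refine totallySeparatedSpace_iff_exists_isClopen.mpr fun z w hzw => ?_
  have hne : (z : K)⁻¹ * w ∉ vonNeumannKernel K := by
    rw [vonNeumannKernel_eq_bot, Subgroup.mem_bot, inv_mul_eq_one]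
    exact fun h => hzw (Subtype.ext h)
  obtain ⟨r, hr⟩ : ∃ r : UnitaryMatrixRep K, r.hom z ≠ r.hom w := by
    simpa [mem_vonNeumannKernel, inv_mul_eq_one] using hne
  exact ⟨_, (r.isLocallyConstant_restrict_center hK).isClopen_fiber (r.hom z), rfl, hr.symm⟩

end CenterTotallySeparated

lemma PosReal.isHomeomorph_pow {n : ℕ} (hn : n ≠ 0) : IsHomeomorph fun p : PosReal => p ^ n := by
  have hpow : Continuous fun p : PosReal => p ^ n := (continuous_subtype_val.pow n).subtype_mk _
  have hroot : Continuous fun p : PosReal => p.rpow (n : ℝ)⁻¹ :=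
    (continuous_subtype_val.rpow_const fun p => .inl p.2.ne').subtype_mk _
  refine isHomeomorph_iff_exists_inverse.mpr ⟨hpow, _, fun p => ?_, fun p => ?_, hroot⟩
  · exact Subtype.ext (Real.pow_rpow_inv_natCast p.2.le hn)
  · exact p.rpow_inv_pow hn

section ConnectedComponent

variable {G P : Type*} [Group G] [TopologicalSpace G] [IsTopologicalGroup G] [Group P]
  [TopologicalSpace P] {ν : G →* P} {S : Subgroup G}

lemma le_connectedComponentOfOne [ConnectedSpace P] (hS : IsHomeomorph (ν.comp S.subtype)) :
    S ≤ Subgroup.connectedComponentOfOne G := by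
  have : ConnectedSpace S := hS.homeomorph.symm.surjective.connectedSpace
    hS.homeomorph.symm.continuous
  intro s hs
  exact (isPreconnected_iff_preconnectedSpace.mpr
    (inferInstanceAs (PreconnectedSpace S))).subset_connectedComponent S.one_mem hs

lemma connectedComponentOfOne_le [TotallyDisconnectedSpace ν.ker] (hν : Continuous ν)
    (hS : IsHomeomorph (ν.comp S.subtype)) : Subgroup.connectedComponentOfOne G ≤ S := by
  let σ : P → S := hS.homeomorph.symm
  have hνσ (p : P) : ν (σ p) = p := hS.homeomorph.apply_symm_apply p
  have hσ1 : σ 1 = 1 := hS.injective (by rw [map_one]; exact hνσ 1)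
  let f (g : G) : ν.ker := ⟨g * (σ (ν g) : G)⁻¹, by simp [MonoidHom.mem_ker, hνσ]⟩
  have hf : Continuous f := by
    have hσ : Continuous σ := hS.homeomorph.symm.continuous
    exact .subtype_mk (by fun_prop) _
  intro g hg
  have hfg : f g = f 1 := (isPreconnected_connectedComponent.image f hf.continuousOn).subsingleton
    ⟨g, hg, rfl⟩ ⟨1, mem_connectedComponent, rfl⟩
  have : g * (σ (ν g) : G)⁻¹ = 1 := by simpa [f, hσ1] using congrArg Subtype.val hfg
  exact mul_inv_eq_one.mp this ▸ (σ (ν g)).2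

end ConnectedComponent

section Divisible

/-- The subgroup of elements having roots of all orders. -/
def divisibleElements (Z : Type*) [CommGroup Z] : Subgroup Z :=
  ⨅ m : ℕ+, (powMonoidHom (m : ℕ)).range

variable {Z : Type*} [CommGroup Z]

lemma mem_divisibleElements {z : Z} :
    z ∈ divisibleElements Z ↔ ∀ m : ℕ+, ∃ y, y ^ (m : ℕ) = z :=
  Subgroup.mem_iInf

lemma eq_one_of_forall_pow_eq {T : Type*} [Group T] [TopologicalSpace T] [IsTopologicalGroup T]
    [CompactSpace T] [TotallyDisconnectedSpace T] {t : T}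
    (ht : ∀ m : ℕ+, ∃ y, y ^ (m : ℕ) = t) : t = 1 := by
  by_contra hne
  obtain ⟨U, hU⟩ := ProfiniteGrp.exist_openNormalSubgroup_sub_open_nhds_of_one
    (isOpen_compl_singleton (x := t)) (Ne.symm hne)
  have : Finite (T ⧸ U.toSubgroup) := U.toSubgroup.quotient_finite_of_isOpen U.isOpen
  obtain ⟨y, hy⟩ := ht ⟨U.toSubgroup.index, U.toSubgroup.index_ne_zero_of_finite.bot_lt⟩
  exact hU (hy ▸ U.toSubgroup.pow_index_mem y) rfl

variable [TopologicalSpace Z] [IsTopologicalGroup Z] {ν : Z →* PosReal}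

lemma isProperMap_pow [T2Space Z] (hν : IsProperMap ν) {m : ℕ} (hm : m ≠ 0) :
    IsProperMap fun z : Z => z ^ m := by
  have hcomp : IsProperMap (ν ∘ fun z => z ^ m) := by
    rw [show ν ∘ (fun z => z ^ m) = (fun p => p ^ m) ∘ ν from funext fun z => map_pow ν z m]
    exact (PosReal.isHomeomorph_pow hm).isClosedEmbedding.isProperMap.comp hν
  exact isProperMap_of_comp_of_t2 (continuous_pow m) hν.continuous hcomp

lemma isClosed_divisibleElements [T2Space Z] (hν : IsProperMap ν) :
    IsClosed (divisibleElements Z : Set Z) := by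
  rw [divisibleElements, Subgroup.coe_iInf]
  exact isClosed_iInter fun m => (isProperMap_pow hν m.ne_zero).isClosedMap.isClosed_range

lemma exists_mem_divisibleElements [T2Space Z] (hν : IsProperMap ν) (hsurj : Function.Surjective ν)
    (p : PosReal) : ∃ z ∈ divisibleElements Z, ν z = p := by
  let F (m : ℕ+) : Set Z := Set.range fun z => z ^ (m : ℕ)
  have hF (m : ℕ+) : IsClosed (F m) := (isProperMap_pow hν m.ne_zero).isClosedMap.isClosed_range
  obtain ⟨z, hz, hzF⟩ : (ν ⁻¹' {p} ∩ ⋂ m, F m).Nonempty := by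
    refine (hν.isCompact_preimage isCompact_singleton).inter_iInter_nonempty F hF fun s => ?_
    let n : ℕ+ := ∏ m ∈ s, m
    obtain ⟨y, hy⟩ := hsurj (p.rpow (n : ℝ)⁻¹)
    refine ⟨y ^ (n : ℕ), ?_, Set.mem_iInter₂.mpr fun m hm => ?_⟩
    · rw [Set.mem_preimage, map_pow, hy, p.rpow_inv_pow n.ne_zero, Set.mem_singleton_iff]
    · obtain ⟨c, hc⟩ : m ∣ n := Finset.dvd_prod_of_mem _ hm
      exact ⟨y ^ (c : ℕ), by rw [hc, PNat.mul_coe, mul_comm, pow_mul]⟩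
  exact ⟨z, mem_divisibleElements.mpr fun m => Set.mem_iInter.mp hzF m, hz⟩

lemma eq_one_of_mem_divisibleElements (hν : IsProperMap ν)
    [TotallyDisconnectedSpace ν.ker] {z : Z} (hz : z ∈ divisibleElements Z) (hzν : ν z = 1) :
    z = 1 := by
  have : CompactSpace ν.ker :=
    isCompact_iff_compactSpace.mp (hν.isCompact_preimage (isCompact_singleton (x := 1)))
  refine congrArg Subtype.val (eq_one_of_forall_pow_eq (t := (⟨z, hzν⟩ : ν.ker)) fun m => ?_)
  obtain ⟨y, hy⟩ := mem_divisibleElements.mp hz m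
  have hyν : ν y = 1 := (pow_eq_one_iff_left m.ne_zero).mp (by rw [← map_pow, hy, hzν])
  exact ⟨⟨y, hyν⟩, Subtype.ext hy⟩

theorem isHomeomorph_divisibleElements [T2Space Z] (hν : IsProperMap ν)
    (hsurj : Function.Surjective ν) [TotallyDisconnectedSpace ν.ker] :
    IsHomeomorph (ν.comp (divisibleElements Z).subtype) := by
  have hproper : IsProperMap (ν.comp (divisibleElements Z).subtype) :=
    hν.comp (isClosed_divisibleElements hν).isClosedEmbedding_subtypeVal.isProperMap
  refine isHomeomorph_iff_continuous_isClosedMap_bijective.mpr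
    ⟨hproper.continuous, hproper.isClosedMap, ?_, fun p => ?_⟩
  · exact (injective_iff_map_eq_one _).mpr fun z hz =>
      Subtype.ext (eq_one_of_mem_divisibleElements hν z.2 hz)
  · obtain ⟨z, hz, rfl⟩ := exists_mem_divisibleElements hν hsurj p
    exact ⟨⟨z, hz⟩, rfl⟩

theorem isHomeomorph_connectedComponentOfOne [T2Space Z] (hν : IsProperMap ν)
    (hsurj : Function.Surjective ν) [TotallyDisconnectedSpace ν.ker] :
    IsHomeomorph (ν.comp (Subgroup.connectedComponentOfOne Z).subtype) := by
  have hS := isHomeomorph_divisibleElements hν hsurj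
  rwa [le_antisymm (connectedComponentOfOne_le hν.continuous hS) (le_connectedComponentOfOne hS)]

end Divisible

section CenterIdentityComponent

variable {L : Type*} [Group L] [TopologicalSpace L]

lemma isHomeomorph_restrict_map_subtype {P : Type*} [TopologicalSpace P] {f : L → P}
    {Z : Subgroup L} {H : Subgroup Z} (hH : IsHomeomorph fun h : H => f (h : Z)) :
    IsHomeomorph fun c : H.map Z.subtype => f c := by
  have hmem (c : H.map Z.subtype) : ∃ hc : (c : L) ∈ Z, (⟨c, hc⟩ : Z) ∈ H := by
    obtain ⟨z, hz, hzc⟩ := c.2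
    exact ⟨hzc ▸ z.2, by simpa [← hzc] using hz⟩
  let e : H.map Z.subtype ≃ₜ H :=
    { toFun c := ⟨⟨c, (hmem c).1⟩, (hmem c).2⟩
      invFun h := ⟨(h : Z), Subgroup.mem_map_of_mem _ h.2⟩
      left_inv _ := rfl
      right_inv _ := rfl }
  exact hH.comp e.isHomeomorph

lemma totallyDisconnectedSpace_ker_comp_center_subtype {P : Type*} [Group P] {ν : L →* P}
    [TotallyDisconnectedSpace (Subgroup.center ν.ker)] :
    TotallyDisconnectedSpace (ν.comp (Subgroup.center L).subtype).ker := by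
  let f (z : (ν.comp (Subgroup.center L).subtype).ker) : Subgroup.center ν.ker :=
    ⟨⟨z, z.2⟩, Subgroup.mem_center_iff.mpr fun k =>
      Subtype.ext (Subgroup.mem_center_iff.mp z.1.2 k)⟩
  have hf : Continuous f := by fun_prop
  have hinj : Function.Injective f := fun z w h =>
    Subtype.ext (Subtype.ext (congrArg (fun x : Subgroup.center ν.ker => (x : L)) h))
  exact ⟨isTotallyDisconnected_of_image hf.continuousOn hinj
    (isTotallyDisconnected_of_totallyDisconnectedSpace _)⟩

variable [IsTopologicalGroup L]

lemma centerIdentityComponent_le_center : centerIdentityComponent L ≤ Subgroup.center L :=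
  Subgroup.map_subtype_le _

open scoped IsMulCommutative in
theorem isHomeomorph_centerIdentityComponent [T2Space L] {ν : L →* PosReal}
    (hν : IsProperMap ν) (hsurj : Function.Surjective ν)
    (hcenter : ν.ker ⊔ Subgroup.center L = ⊤)
    [TotallyDisconnectedSpace (Subgroup.center ν.ker)] :
    IsHomeomorph fun c : centerIdentityComponent L => ν c := by
  have hclosed : IsClosed (Subgroup.center L : Set L) := by
    rw [Subgroup.coe_center, ← Set.centralizer_univ]
    exact Set.isClosed_centralizer _
  have := totallyDisconnectedSpace_ker_comp_center_subtype (ν := ν)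
  have hproper : IsProperMap (ν.comp (Subgroup.center L).subtype) :=
    hν.comp hclosed.isClosedEmbedding_subtypeVal.isProperMap
  have hcentersurj := surjective_comp_subtype_of_ker_sup_eq_top hsurj hcenter
  exact isHomeomorph_restrict_map_subtype (f := ν)
    (isHomeomorph_connectedComponentOfOne hproper hcentersurj)

end CenterIdentityComponent

section Complement

variable {G P : Type*} [Group G] [Group P] {ν : G →* P} {C : Subgroup G}

lemma inter_ker_eq_singleton_one (hC : Function.Injective fun c : C => ν c) :
    (C : Set G) ∩ ν.ker = {1} := by
  refine Set.eq_singleton_iff_unique_mem.mpr ⟨⟨C.one_mem, ν.ker.one_mem⟩, fun c hc => ?_⟩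
  have : (⟨c, hc.1⟩ : C) = 1 := hC (hc.2.trans (map_one ν).symm)
  exact congrArg Subtype.val this

lemma exists_eq_mul_ker (hC : Function.Surjective fun c : C => ν c) (x : G) :
    ∃ c ∈ C, ∃ k ∈ ν.ker, x = c * k := by
  obtain ⟨c, hc⟩ := hC (ν x)
  exact ⟨c, c.2, (c : G)⁻¹ * x, by simp [MonoidHom.mem_ker, ← hc], by group⟩

lemma mul_mul_mul_comm_of_le_center {K : Subgroup G} (hC : C ≤ Subgroup.center G) (p q : C × K) :
    ((p * q).1 : G) * (p * q).2 = (p.1 * p.2) * (q.1 * q.2) :=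
  Commute.mul_mul_mul_comm (Subgroup.mem_center_iff.mp (hC q.1.2) p.2).symm p.1 q.2

variable [TopologicalSpace G] [TopologicalSpace P] [IsTopologicalGroup G]

open scoped Pointwise in
lemma isProperMap_of_isHomeomorph_kerLift
    (hquot : IsHomeomorph (QuotientGroup.kerLift ν)) (hcompact : IsCompact (ν.ker : Set G)) :
    IsProperMap ν := by
  have hmk : IsProperMap (QuotientGroup.mk : G → G ⧸ ν.ker) := by
    refine isProperMap_iff_isClosedMap_and_compact_fibers.mpr
      ⟨continuous_quotient_mk', QuotientGroup.isClosedMap_coe hcompact, fun y => ?_⟩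
    obtain ⟨g, rfl⟩ := QuotientGroup.mk_surjective y
    have hfiber : QuotientGroup.mk ⁻¹' {(g : G ⧸ ν.ker)} = g • (ν.ker : Set G) :=
      QuotientGroup.eq_class_eq_leftCoset ν.ker g
    exact hfiber ▸ hcompact.smul g
  exact hquot.isClosedEmbedding.isProperMap.comp hmk

theorem isHomeomorph_mul_ker (hν : Continuous ν)
    (hC : IsHomeomorph fun c : C => ν c) :
    IsHomeomorph fun p : C × ν.ker => (p.1 : G) * p.2 := by
  let σ (x : G) : C := hC.homeomorph.symm (ν x)
  have hνσ (x : G) : ν (σ x) = ν x := hC.homeomorph.apply_symm_apply (ν x)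
  have hσ : Continuous σ := hC.homeomorph.symm.continuous.comp hν
  have hσmul (p : C × ν.ker) : σ (p.1 * p.2) = p.1 := hC.injective <| by
    simp only [hνσ, map_mul, MonoidHom.mem_ker.mp p.2.2, mul_one]
  let κ (x : G) : ν.ker := ⟨(σ x : G)⁻¹ * x, by simp [MonoidHom.mem_ker, hνσ]⟩
  refine isHomeomorph_iff_exists_inverse.mpr
    ⟨by fun_prop, fun x => (σ x, κ x), fun p => ?_, fun x => ?_, by fun_prop⟩
  · exact Prod.ext (hσmul p) (Subtype.ext (by simp [κ, hσmul]))
  · exact mul_inv_cancel_left _ _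

end Complement

/-- Polar decomposition: if `L` is a locally compact Hausdorff topological group and
`ν : L → ℝ_{>0}` is a continuous surjective homomorphism such that (a) `ker ν` is the closure
`D(L)` of the commutator subgroup, (b) the induced isomorphism `L / ker ν → ℝ_{>0}` is a
homeomorphism, and (c) `ker ν` is compact, then, `C` denoting the identity component of the
center of `L`: (i) `C ∩ ker ν = {1}`, `L = C ⬝ ker ν`, and the multiplication map
`C × ker ν → L` is an isomorphism of topological groups; (ii) `ν` restricts to an isomorphism
of topological groups `C → ℝ_{>0}`; (iii) `D(ker ν) = ker ν`. -/
theorem statement3 {L : Type*} [Group L] [TopologicalSpace L] [IsTopologicalGroup L]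
    [LocallyCompactSpace L] [T2Space L]
    (ν : L →* PosReal) (hcont : Continuous ⇑ν) (hsurj : Function.Surjective ⇑ν)
    (hker : ν.ker = (commutator L).topologicalClosure)
    (hquot : IsHomeomorph ⇑(QuotientGroup.kerLift ν))
    (hcompact : IsCompact (ν.ker : Set L)) :
    ((centerIdentityComponent L : Set L) ∩ (ν.ker : Set L) = {1}) ∧
      (∀ x : L, ∃ c ∈ centerIdentityComponent L, ∃ k ∈ ν.ker, x = c * k) ∧
      (∀ p q : ↥(centerIdentityComponent L) × ↥ν.ker,
        (((p * q).1 : L) * ((p * q).2 : L)) =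
          ((p.1 : L) * (p.2 : L)) * ((q.1 : L) * (q.2 : L))) ∧
      IsHomeomorph (fun p : ↥(centerIdentityComponent L) × ↥ν.ker =>
        (p.1 : L) * (p.2 : L)) ∧
      IsHomeomorph (fun c : ↥(centerIdentityComponent L) => ν (c : L)) ∧
      (commutator ↥ν.ker).topologicalClosure = ⊤ := by
  have hproper : IsProperMap ν := isProperMap_of_isHomeomorph_kerLift hquot hcompact
  have : CompactSpace ν.ker := isCompact_iff_compactSpace.mp hcompact
  have : ConnectedSpace (L ⧸ ν.ker) :=
    hquot.homeomorph.symm.surjective.connectedSpace hquot.homeomorph.symm.continuous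
  have hcenter : ν.ker ⊔ Subgroup.center L = ⊤ :=
    ker_sup_center_eq_top hproper hsurj sup_centralizer_eq_top
  have hperfect : (commutator ν.ker).topologicalClosure = ⊤ :=
    topologicalClosure_commutator_eq_top hcenter hker.le
  have := totallySeparatedSpace_center hperfect
  have hC : IsHomeomorph fun c : centerIdentityComponent L => ν c :=
    isHomeomorph_centerIdentityComponent hproper hsurj hcenter
  exact ⟨inter_ker_eq_singleton_one hC.injective, exists_eq_mul_ker hC.surjective,
    mul_mul_mul_comm_of_le_center centerIdentityComponent_le_center,
    isHomeomorph_mul_ker hcont hC, hC, hperfect⟩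
end
end
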